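/- arXiv:1607.07174 — 2 statements merged into one kernel-verified Lean document; each statement's English description precedes it below -/
import Mathlib

section
/- Let C be a class of finite simple graphs of bounded expansion. Then for each positive integer k there exists a constant c_k (depending only on k and C) such that every graph G in C satisfies f_k(G) ≤ c_k. -/
open scoped Classical
open scoped Function

namespace InducedArboricity

/-- The edges of the subgraph of `G` induced by vertex set `S`, viewed as edges of `G`. -/
def forestEdges {V : Type*} (G : SimpleGraph V) (S : Set V) : Set (Sym2 V) :=
  {e | e ∈ G.edgeSet ∧ ∀ x ∈ e, x ∈ S}

/-- The number of edges of the connected component of `v` in `H`. -/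
noncomputable def compEdgeCount {W : Type*} (H : SimpleGraph W) (v : W) : ℕ :=
  {e | e ∈ H.edgeSet ∧ ∀ x ∈ e, H.Reachable v x}.ncard

/-- `S` induces a `k`-strong forest in `G`: the induced subgraph is acyclic and each of its
connected components has at least `k` edges. -/
def IsStrongForest {V : Type*} (G : SimpleGraph V) (k : ℕ) (S : Set V) : Prop :=
  (G.induce S).IsAcyclic ∧ ∀ v : S, k ≤ compEdgeCount (G.induce S) v

/-- An edge `e` of `G` is `k`-valid if it lies in some `k`-strong forest of `G`. -/
def KValid {V : Type*} (G : SimpleGraph V) (k : ℕ) (e : Sym2 V) : Prop :=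
  ∃ S : Set V, IsStrongForest G k S ∧ e ∈ forestEdges G S

/-- The `k`-strong induced arboricity: the least number of `k`-strong forests of `G`
covering all `k`-valid edges of `G`. -/
noncomputable def fStrong {V : Type*} (G : SimpleGraph V) (k : ℕ) : ℕ :=
  sInf {N | ∃ F : Fin N → Set V,
    (∀ i, IsStrongForest G k (F i)) ∧
    ∀ e : Sym2 V, KValid G k e → ∃ i, e ∈ forestEdges G (F i)}

/-- `G` is a `d`-shallow minor of `H`. -/
def IsShallowMinor {V W : Type*} (d : ℕ) (G : SimpleGraph V) (H : SimpleGraph W) : Prop :=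
  ∃ B : V → Set W,
    Pairwise (Disjoint on B) ∧
    (∀ v, ∃ c : B v, ∀ y : B v,
      (H.induce (B v)).Reachable c y ∧ (H.induce (B v)).dist c y ≤ d) ∧
    (∀ u v, G.Adj u v → ∃ x ∈ B u, ∃ y ∈ B v, H.Adj x y)

/-- A class of finite simple graphs, one set of graphs for each number of vertices. -/
def GraphClass : Type :=
  ∀ n : ℕ, Set (SimpleGraph (Fin n))

/-- A class of graphs has bounded expansion if for every `d` there is a constant `a` such that
every `d`-shallow minor of a member of the class has at most `a` times as many edges
as vertices. -/
def BoundedExpansion (C : GraphClass) : Prop :=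
  ∀ d : ℕ, ∃ a : ℕ, ∀ (m : ℕ) (G : SimpleGraph (Fin m)),
    (∃ n : ℕ, ∃ H ∈ C n, IsShallowMinor d G H) → G.edgeSet.ncard ≤ a * m

/-- A class of graphs is nowhere dense if for every `d` some graph is not a `d`-shallow minor
of any member of the class. -/
def NowhereDense (C : GraphClass) : Prop :=
  ∀ d : ℕ, ∃ (m : ℕ) (G : SimpleGraph (Fin m)), ¬ ∃ n : ℕ, ∃ H ∈ C n, IsShallowMinor d G H

/-- The closed neighborhood of `v` in `G`. -/
def closedNbr {V : Type*} (G : SimpleGraph V) (v : V) : Set V :=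
  insert v (G.neighborSet v)

/-- The sum of the labels over the closed neighborhood of `v`. -/
noncomputable def closedNbrSum {V : Type*} [Fintype V] (G : SimpleGraph V)
    (f : V → ℕ) (v : V) : ℕ :=
  ∑ x : V, if x ∈ closedNbr G v then f x else 0

/-- A labeling is distinguishing if adjacent vertices with different closed neighborhoods
receive different label sums over their closed neighborhoods. -/
def Distinguishing {V : Type*} [Fintype V] (G : SimpleGraph V) (f : V → ℕ) : Prop :=
  ∀ u v : V, G.Adj u v → closedNbr G u ≠ closedNbr G v →
    closedNbrSum G f u ≠ closedNbrSum G f v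

/-- The adjacent closed vertex-distinguishing number of `G`. -/
noncomputable def disNumber {V : Type*} [Fintype V] (G : SimpleGraph V) : ℕ :=
  sInf {L | 1 ≤ L ∧ ∃ f : V → ℕ, (∀ v, 1 ≤ f v ∧ f v ≤ L) ∧ Distinguishing G f}

/-- A proper coloring in which any two color classes together induce a forest. -/
def IsAcyclicColoring {V : Type*} (G : SimpleGraph V) {m : ℕ} (c : V → Fin m) : Prop :=
  (∀ u v : V, G.Adj u v → c u ≠ c v) ∧
  ∀ i j : Fin m, (G.induce {v | c v = i ∨ c v = j}).IsAcyclic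

/-- The acyclic chromatic number of `G`. -/
noncomputable def chiAcyc {V : Type*} (G : SimpleGraph V) : ℕ :=
  sInf {m | ∃ c : V → Fin m, IsAcyclicColoring G c}

/-- The edge arboricity of `G`: the least number of (not necessarily induced) forests
covering all edges of `G`. -/
noncomputable def arboricity {V : Type*} (G : SimpleGraph V) : ℕ :=
  sInf {N | ∃ F : Fin N → SimpleGraph V,
    (∀ i, F i ≤ G ∧ (F i).IsAcyclic) ∧
    ∀ e ∈ G.edgeSet, ∃ i, e ∈ (F i).edgeSet}

/-- `G` admits a tree decomposition of width at most `t`. -/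
def HasTreewidthAtMost {V : Type*} (G : SimpleGraph V) (t : ℕ) : Prop :=
  ∃ (ι : Type) (T : SimpleGraph ι) (B : ι → Finset V),
    T.IsTree ∧
    (∀ e ∈ G.edgeSet, ∃ i, ∀ x ∈ e, x ∈ B i) ∧
    (∀ v : V, (T.induce {i | v ∈ B i}).Connected) ∧
    (∀ i, (B i).card ≤ t + 1)

/-- The tree-width of `G`. -/
noncomputable def treewidth {V : Type*} (G : SimpleGraph V) : ℕ :=
  sInf {t | HasTreewidthAtMost G t}

/-- `G` has tree-depth at most `d`: there is a "forest order" on the vertices (the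
ancestor order of a rooted spanning forest) in which ancestor sets are chains of at most
`d` vertices and endpoints of edges of `G` are comparable.  Equivalently, every connected
component of `G` is a subgraph of the transitive closure of a rooted tree of depth `d`. -/
def HasTreedepthAtMost {V : Type*} (G : SimpleGraph V) (d : ℕ) : Prop :=
  ∃ le : V → V → Prop, IsPartialOrder V le ∧
    (∀ v : V, IsChain le {u | le u v}) ∧
    (∀ u v : V, G.Adj u v → le u v ∨ le v u) ∧
    (∀ v : V, {u | le u v}.ncard ≤ d)

/-- The tree-depth of `G`. -/
noncomputable def treedepth {V : Type*} (G : SimpleGraph V) : ℕ :=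
  sInf {d | HasTreedepthAtMost G d}

/-- `G` is a minor of `H`, witnessed by disjoint connected branch sets. -/
def IsMinorOf {V W : Type*} (G : SimpleGraph V) (H : SimpleGraph W) : Prop :=
  ∃ B : V → Set W,
    Pairwise (Disjoint on B) ∧
    (∀ v, (B v).Nonempty) ∧
    (∀ v, (H.induce (B v)).Connected) ∧
    (∀ u v, G.Adj u v → ∃ x ∈ B u, ∃ y ∈ B v, H.Adj x y)

/-- A class of graphs closed under taking minors. -/
def MinorClosed (C : GraphClass) : Prop :=
  ∀ (m n : ℕ) (G : SimpleGraph (Fin m)) (H : SimpleGraph (Fin n)),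
    H ∈ C n → IsMinorOf G H → G ∈ C m

/-- Planarity, via Wagner's characterization: no `K₅` and no `K₃,₃` minor. -/
def IsPlanar {V : Type*} (G : SimpleGraph V) : Prop :=
  ¬ IsMinorOf (SimpleGraph.completeGraph (Fin 5)) G ∧
  ¬ IsMinorOf (completeBipartiteGraph (Fin 3) (Fin 3)) G

/-!
Let `G` have sparse shallow minors. Every nonempty vertex set `S` then contains a vertex that few
further vertices separate, at distance `R`, from the rest of `S`: a maximal packing of short
connections between the vertices of `S` is a sparse minor, so a large part `I` of `S` is
independent in it, and contracting the balls around `I` gives another sparse minor, in which some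
vertex of `I` has few neighbors outside `I`. Removing such vertices one at a time orders `V` so
that every vertex weakly `R`-reaches boundedly many others, and a greedy coloring along this order
makes any `k + 1` color classes induce a graph of treedepth at most `k + 1`. A `k`-valid edge lies
in a tree with `k + 1` vertices, hence in a `k`-strong forest inside some `k + 1` color classes, so
it is enough to treat graphs of bounded treedepth.

There, call `y` rare for an ancestor `r` if fewer than `k` vertices at the depth of `y` root a
subtree into which a tree branches off from `r`. Boundedly many vertices are reached from a given
vertex along rare steps. Walk up from the lower end `v` of a valid edge through the tree containing
it. If all steps are rare, then `v` is one of boundedly many vertices for the root of that tree.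
Otherwise the first step that is not rare leads to a vertex `r` with at least `k` disjoint branches,
which glued together at `r` form a tree with at least `k` edges. Trees whose roots have
equal depth lie in disjoint, non-adjacent subtrees and form a single `k`-strong forest.
-/

section Combinatorics

lemma ncard_le_pow_of_branching {α : Type*} [Finite α] {N : α → Set α} {D : ℕ → α → Set α} {h : ℕ}
    (hN : ∀ x, (N x).ncard ≤ h) (hzero : ∀ x, D 0 x ⊆ {x})
    (hsucc : ∀ n x, D (n + 1) x ⊆ insert x (⋃ y ∈ N x, D n y)) (n : ℕ) (x : α) :
    (D n x).ncard ≤ (h + 1) ^ n := by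
  induction n generalizing x with
  | zero => simpa using Set.ncard_le_ncard (hzero x)
  | succ n ih =>
    have hfin : (N x).Finite := Set.toFinite _
    have hunion : (⋃ y ∈ N x, D n y).ncard ≤ h * (h + 1) ^ n := calc
      (⋃ y ∈ N x, D n y).ncard = (⋃ y ∈ hfin.toFinset, D n y).ncard := by simp
      _ ≤ ∑ y ∈ hfin.toFinset, (D n y).ncard := Finset.set_ncard_biUnion_le _ _
      _ ≤ hfin.toFinset.card * (h + 1) ^ n := Finset.sum_le_card_nsmul _ _ _ fun y _ => ih y
      _ ≤ h * (h + 1) ^ n := by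
        rw [← Set.ncard_eq_toFinset_card]
        gcongr
        exact hN x
    calc (D (n + 1) x).ncard
        ≤ (⋃ y ∈ N x, D n y).ncard + 1 :=
          (Set.ncard_le_ncard (hsucc n x)).trans (Set.ncard_insert_le _ _)
      _ ≤ h * (h + 1) ^ n + (h + 1) ^ n := add_le_add hunion (Nat.one_le_pow' _ _)
      _ = (h + 1) ^ (n + 1) := by ring

lemma exists_fin_family {α β : Type*} {E : Set α} (hE : E.Finite) {M : ℕ} (hM : E.ncard ≤ M)
    {P : β → Prop} {R : α → β → Prop} (hP : ∃ b, P b) (hR : ∀ a ∈ E, ∃ b, P b ∧ R a b) :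
    ∃ g : Fin M → β, (∀ t, P (g t)) ∧ ∀ a ∈ E, ∃ t, R a (g t) := by
  obtain ⟨b, hb⟩ := hP
  have := hE.fintype
  obtain ⟨ι⟩ : Nonempty (E ↪ Fin M) := Function.Embedding.nonempty_of_card_le <| by
    rwa [Fintype.card_fin, ← Nat.card_eq_fintype_card, Nat.card_coe_set_eq]
  choose f hfP hfR using fun a : E => hR a a.2
  refine ⟨Function.extend ι f fun _ => b, fun t => ?_, fun a ha => ⟨ι ⟨a, ha⟩, ?_⟩⟩
  · by_cases ht : ∃ a, ι a = t
    · obtain ⟨a, rfl⟩ := ht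
      exact ι.injective.extend_apply f _ a ▸ hfP a
    · exact (Function.extend_apply' f (fun _ => b) t ht).symm ▸ hb
  · exact ι.injective.extend_apply f _ ⟨a, ha⟩ ▸ hfR ⟨a, ha⟩

lemma exists_elimination_order {V : Type*} [Finite V] {P : Set V → V → Prop}
    (hP : ∀ S : Set V, S.Nonempty → ∃ v ∈ S, P S v) :
    ∃ f : V → ℕ, Function.Injective f ∧ ∀ v, P {u | f u ≤ f v} v := by
  suffices h : ∀ S : Finset V, ∃ f : V → ℕ, Set.InjOn f S ∧
      ∀ v ∈ S, P {u | u ∈ S ∧ f u ≤ f v} v by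
    have := Fintype.ofFinite V
    simpa using h Finset.univ
  intro S
  induction S using Finset.strongInduction with | H S ih =>
  obtain rfl | hS := S.eq_empty_or_nonempty
  · exact ⟨0, by simp⟩
  obtain ⟨v, hv, hPv⟩ := hP S hS
  obtain ⟨f, hf, hfP⟩ := ih (S.erase v) (Finset.erase_ssubset hv)
  set m := (S.erase v).sup f + 1
  set g := Function.update f v m
  have hgv : g v = m := Function.update_self ..
  have hgf : ∀ u ≠ v, g u = f u := fun u hu => Function.update_of_ne hu ..
  have hlt : ∀ u ∈ S, u ≠ v → g u < m := fun u hu huv =>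
    (hgf u huv).trans_lt (Nat.lt_succ_of_le (Finset.le_sup (Finset.mem_erase.2 ⟨huv, hu⟩)))
  refine ⟨g, fun x hx y hy hxy => ?_, fun u hu => ?_⟩
  · by_cases hxv : x = v <;> by_cases hyv : y = v
    · rw [hxv, hyv]
    · exact absurd (hxy ▸ hxv ▸ hgv) (hlt y hy hyv).ne
    · exact absurd (hxy ▸ hyv ▸ hgv) (hlt x hx hxv).ne
    · exact hf (Finset.mem_erase.2 ⟨hxv, hx⟩) (Finset.mem_erase.2 ⟨hyv, hy⟩)
        (hgf x hxv ▸ hgf y hyv ▸ hxy)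
  · by_cases huv : u = v
    · suffices {w | w ∈ S ∧ g w ≤ g u} = S by rwa [this, huv]
      refine Set.sep_eq_self_iff_mem_true.2 fun w hw => ?_
      by_cases hwv : w = v
      · rw [hwv, huv]
      · rw [huv, hgv]
        exact (hlt w hw hwv).le
    · convert hfP u (Finset.mem_erase.2 ⟨huv, hu⟩) using 1
      ext w
      by_cases hwv : w = v
      · simp [hwv, hgv, hlt u hu huv]
      · simp [hwv, hgf u huv, hgf w hwv]

lemma exists_greedy_coloring {V : Type*} [Finite V] {r : V → V → Prop} (hr : WellFounded r) {b : ℕ}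
    (hb : ∀ v, {u | r u v}.ncard ≤ b) :
    ∃ φ : V → Fin (b + 1), ∀ u v, r u v → φ u ≠ φ v := by
  have hfree : ∀ v (φ : {u | r u v} → Fin (b + 1)), ∃ c, c ∉ Set.range φ := by
    intro v φ
    by_contra! hcon
    have := Nat.card_le_card_of_surjective φ hcon
    rw [Nat.card_coe_set_eq, Nat.card_fin] at this
    exact absurd (hb v) (by omega)
  choose c hc using hfree
  obtain ⟨φ, hφ⟩ : ∃ φ : V → Fin (b + 1), ∀ v, φ v = c v fun u => φ u :=
    ⟨hr.fix fun v φ => c v fun u => φ u u.2, fun v => hr.fix_eq _ v⟩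
  exact ⟨φ, fun u v huv h => hc v (fun u => φ u) ⟨⟨u, huv⟩, h.trans (hφ v)⟩⟩

lemma exists_isIndepSet_of_ncard_edgeSet_le {ι : Type*} [Finite ι] {Γ : SimpleGraph ι} {a : ℕ}
    (hΓ : Γ.edgeSet.ncard ≤ a * Nat.card ι) :
    ∃ I : Set ι, Γ.IsIndepSet I ∧ Nat.card ι ≤ 2 * (4 * a + 1) * I.ncard := by
  have := Fintype.ofFinite ι
  set L : Finset ι := {v | Γ.degree v ≤ 4 * a} with hL
  have hLc : Fintype.card ι ≤ 2 * L.card := by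
    have hsum : (4 * a + 1) * Lᶜ.card ≤ 2 * (a * Fintype.card ι) := calc
      (4 * a + 1) * Lᶜ.card ≤ ∑ v ∈ Lᶜ, Γ.degree v := by
        rw [mul_comm, ← smul_eq_mul]
        exact Finset.card_nsmul_le_sum _ (Γ.degree ·) _ fun v hv => by simpa [hL] using hv
      _ ≤ ∑ v, Γ.degree v := Finset.sum_le_univ_sum_of_nonneg fun _ => Nat.zero_le _
      _ = 2 * Γ.edgeSet.ncard := by
        rw [Γ.sum_degrees_eq_twice_card_edges, ← Γ.coe_edgeFinset, Set.ncard_coe_finset]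
      _ ≤ 2 * (a * Fintype.card ι) := by
        gcongr
        rwa [← Nat.card_eq_fintype_card]
    have := L.card_add_card_compl
    nlinarith
  obtain ⟨I, hI⟩ := (Set.toFinite {I : Finset ι | I ⊆ L ∧ Γ.IsIndepSet I}).exists_maximal
    ⟨∅, by simp⟩
  have hcover : L ⊆ I.biUnion fun v => insert v (Γ.neighborFinset v) := by
    intro u hu
    by_contra hcov
    simp only [Finset.mem_biUnion, Finset.mem_insert, SimpleGraph.mem_neighborFinset,
      not_exists, not_and, not_or] at hcov
    have hins : insert u I ⊆ L ∧ Γ.IsIndepSet (insert u I : Finset ι) := by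
      refine ⟨Finset.insert_subset hu hI.prop.1, ?_⟩
      rw [Finset.coe_insert, SimpleGraph.IsIndepSet, Set.pairwise_insert]
      exact ⟨hI.prop.2, fun v hv _ => ⟨fun h => (hcov v hv).2 h.symm, (hcov v hv).2⟩⟩
    exact (hcov u (hI.le_of_ge hins (Finset.subset_insert u I) (Finset.mem_insert_self u I))).1 rfl
  refine ⟨I, hI.prop.2, ?_⟩
  calc Nat.card ι ≤ 2 * L.card := by rwa [Nat.card_eq_fintype_card]
    _ ≤ 2 * (I.card * (4 * a + 1)) := by
      gcongr
      refine (Finset.card_le_card hcover).trans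
        (Finset.card_biUnion_le_card_mul _ _ _ fun v hv => ?_)
      have : Γ.degree v ≤ 4 * a := by simpa [hL] using hI.prop.1 hv
      exact (Finset.card_insert_le _ _).trans (Nat.succ_le_succ this)
    _ = 2 * (4 * a + 1) * (I : Set ι).ncard := by
      rw [Set.ncard_coe_finset]
      ring

lemma exists_ncard_neighborSet_le {ι : Type*} [Finite ι] {Γ : SimpleGraph ι} {I J : Set ι} {h : ℕ}
    (hI : I.Nonempty) (hΓ : Γ.IsBipartiteWith I J) (hcard : Γ.edgeSet.ncard ≤ h * I.ncard) :
    ∃ v ∈ I, (Γ.neighborSet v).ncard ≤ h := by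
  have := Fintype.ofFinite ι
  rw [← Set.coe_toFinset I, ← Set.coe_toFinset J] at hΓ
  rw [← Γ.coe_edgeFinset, Set.ncard_coe_finset, Set.ncard_eq_toFinset_card', mul_comm,
    ← smul_eq_mul, ← SimpleGraph.isBipartiteWith_sum_degrees_eq_card_edges hΓ] at hcard
  obtain ⟨v, hv, hdeg⟩ := Finset.exists_le_of_sum_le (Set.toFinset_nonempty.2 hI)
    (hcard.trans_eq (Finset.sum_const h).symm)
  exact ⟨v, Set.mem_toFinset.1 hv, by rwa [Set.ncard_eq_toFinset_card']⟩

end Combinatorics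

section Linkage

variable {V : Type*} {G : SimpleGraph V} {S T : Set V} {m n : ℕ} {x y z : V}

/-- `x` and `y` are joined by a walk of `G` all of whose vertices lie in `T`. -/
def Linked (G : SimpleGraph V) (T : Set V) (x y : V) : Prop :=
  ∃ p : G.Walk x y, ∀ z ∈ p.support, z ∈ T

/-- `x` and `y` are joined by a walk of `G` of length at most `n` all of whose vertices lie
in `T`. -/
def LinkedWithin (G : SimpleGraph V) (T : Set V) (n : ℕ) (x y : V) : Prop :=
  ∃ p : G.Walk x y, p.length ≤ n ∧ ∀ z ∈ p.support, z ∈ T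

lemma exists_eq_append_cons (p : G.Walk x y) (hxy : x ≠ y) (hpn : p.length ≤ 2 * n) :
    ∃ a b, ∃ (q : G.Walk x a) (hab : G.Adj a b) (r : G.Walk b y),
      p = q.append (.cons hab r) ∧ q.length ≤ n ∧ r.length ≤ n := by
  have hpos : p.length ≠ 0 := fun h => hxy (SimpleGraph.Walk.eq_of_length_eq_zero h)
  have hdrop := p.drop_length ((p.length - 1) / 2)
  obtain ⟨b, hab, r, hr⟩ : ∃ b, ∃ (hab : G.Adj (p.getVert ((p.length - 1) / 2)) b)
      (r : G.Walk b y), p.drop ((p.length - 1) / 2) = .cons hab r := by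
    rw [← SimpleGraph.Walk.not_nil_iff, ← SimpleGraph.Walk.length_eq_zero_iff]
    omega
  rw [hr, SimpleGraph.Walk.length_cons] at hdrop
  refine ⟨_, b, p.take ((p.length - 1) / 2), hab, r, ?_, ?_, by omega⟩
  · rw [← hr, p.append_take_drop_eq]
  · rw [p.take_length]
    omega

namespace LinkedWithin

lemma refl (n : ℕ) (hx : x ∈ T) : LinkedWithin G T n x x :=
  ⟨.nil, by simp, by simpa using hx⟩

lemma mono (hST : S ⊆ T) (hmn : m ≤ n) (h : LinkedWithin G S m x y) : LinkedWithin G T n x y :=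
  let ⟨p, hp, hS⟩ := h
  ⟨p, hp.trans hmn, fun z hz => hST (hS z hz)⟩

lemma trans (hxy : LinkedWithin G T m x y) (hyz : LinkedWithin G T n y z) :
    LinkedWithin G T (m + n) x z := by
  obtain ⟨p, hpm, hpT⟩ := hxy
  obtain ⟨q, hqn, hqT⟩ := hyz
  refine ⟨p.append q, by simpa using add_le_add hpm hqn, fun w hw => ?_⟩
  rcases (p.mem_support_append_iff q).1 hw with hw | hw
  exacts [hpT w hw, hqT w hw]

lemma symm (h : LinkedWithin G T n x y) : LinkedWithin G T n y x :=
  let ⟨p, hp, hT⟩ := h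
  ⟨p.reverse, by simpa using hp, fun z hz => hT z (by simpa using hz)⟩

lemma left_mem (h : LinkedWithin G T n x y) : x ∈ T :=
  let ⟨p, _, hT⟩ := h
  hT x p.start_mem_support

lemma right_mem (h : LinkedWithin G T n x y) : y ∈ T := h.symm.left_mem

lemma of_adj (h : G.Adj x y) (hx : x ∈ T) (hy : y ∈ T) : LinkedWithin G T 1 x y :=
  ⟨h.toWalk, by simp, by simp [hx, hy]⟩

lemma linked (h : LinkedWithin G T n x y) : Linked G T x y :=
  let ⟨p, _, hT⟩ := h
  ⟨p, hT⟩

lemma ball (h : LinkedWithin G T n x y) :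
    LinkedWithin G {z | LinkedWithin G T n x z} n x y := by
  obtain ⟨p, hpn, hpT⟩ := h
  refine ⟨p, hpn, fun z hz => ⟨p.takeUntil z hz, (p.length_takeUntil_le_length hz).trans hpn,
    fun w hw => hpT w (p.support_takeUntil_subset_support hz hw)⟩⟩

lemma exists_first_entry {B : Set V} (h : LinkedWithin G T n x y) (hx : x ∉ B) (hy : y ∈ B) :
    ∃ i j a b, i + 1 + j ≤ n ∧ LinkedWithin G (T \ B) i x a ∧ G.Adj a b ∧ b ∈ B ∧
      LinkedWithin G T j b y := by
  obtain ⟨p, hpn, hpT⟩ := h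
  induction p generalizing n with
  | nil => exact absurd hy hx
  | @cons x c y hxc p ih =>
    have hxT : x ∈ T \ B := ⟨hpT x (by simp), hx⟩
    have hpT' : ∀ z ∈ p.support, z ∈ T := fun z hz => hpT z (by simp [hz])
    rw [SimpleGraph.Walk.length_cons] at hpn
    by_cases hc : c ∈ B
    · exact ⟨0, p.length, x, c, by omega, refl 0 hxT, hxc, hc, p, le_rfl, hpT'⟩
    · obtain ⟨i, j, a, b, hij, hca, hab, hb, hby⟩ := ih hc hy le_rfl hpT'
      exact ⟨1 + i, j, a, b, by omega, (of_adj hxc hxT hca.left_mem).trans hca, hab, hb, hby⟩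

lemma exists_hit {H : Set V} (h : LinkedWithin G T n x y) (hx : x ∉ H)
    (hH : ¬ LinkedWithin G Hᶜ n x y) : ∃ j b, j < n ∧ b ∈ H ∧ LinkedWithin G T j b y := by
  obtain ⟨p, hpn, hpT⟩ := h
  obtain ⟨b, hbp, hbH⟩ : ∃ b ∈ p.support, b ∈ H := by
    by_contra! hcon
    exact hH ⟨p, hpn, hcon⟩
  have hbx : b ≠ x := fun h => hx (h ▸ hbH)
  exact ⟨(p.dropUntil b hbp).length, b, (p.length_dropUntil_lt_length hbp hbx).trans_le hpn, hbH,
    p.dropUntil b hbp, le_rfl, fun z hz => hpT z (p.support_dropUntil_subset_support hbp hz)⟩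

lemma map {W : Type*} {H : SimpleGraph W} (φ : G →g H) (h : LinkedWithin G T n x y) :
    LinkedWithin H (φ '' T) n (φ x) (φ y) := by
  obtain ⟨p, hpn, hpT⟩ := h
  refine ⟨p.map φ, by simpa using hpn, fun z hz => ?_⟩
  rw [SimpleGraph.Walk.support_map] at hz
  obtain ⟨w, hw, rfl⟩ := List.mem_map.1 hz
  exact ⟨w, hpT w hw, rfl⟩

lemma support (p : G.Walk x y) (hz : z ∈ p.support) :
    LinkedWithin G {w | w ∈ p.support} p.length x z :=
  ⟨p.takeUntil z hz, p.length_takeUntil_le_length hz,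
    fun _ hw => p.support_takeUntil_subset_support hz hw⟩

lemma exists_bisection (h : LinkedWithin G T (2 * n) x y) (hxy : x ≠ y) :
    ∃ A B : Set V, A ⊆ T ∧ B ⊆ T ∧ Disjoint A B ∧ (A ∪ B).ncard ≤ 2 * n + 1 ∧
      (∀ z ∈ A, LinkedWithin G A n x z) ∧ (∀ z ∈ B, LinkedWithin G B n y z) ∧
      ∃ a ∈ A, ∃ b ∈ B, G.Adj a b := by
  obtain ⟨p, hpath, hpn, hpT⟩ :
      ∃ p : G.Walk x y, p.IsPath ∧ p.length ≤ 2 * n ∧ ∀ z ∈ p.support, z ∈ T :=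
    let ⟨p, hpn, hpT⟩ := h
    ⟨p.bypass, p.bypass_isPath, p.length_bypass_le_length.trans hpn,
      fun z hz => hpT z (p.support_bypass_subset_support hz)⟩
  obtain ⟨a, b, q, hab, r, rfl, hq, hr⟩ := exists_eq_append_cons p hxy hpn
  have hsupp : (q.append (.cons hab r)).support = q.support ++ r.support := by
    simp [SimpleGraph.Walk.support_append]
  rw [SimpleGraph.Walk.isPath_def, hsupp, List.nodup_append] at hpath
  simp only [hsupp, List.mem_append] at hpT
  refine ⟨{z | z ∈ q.support}, {z | z ∈ r.support}, fun z hz => hpT z (.inl hz),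
    fun z hz => hpT z (.inr hz), Set.disjoint_left.2 fun z hzq hzr => hpath.2.2 z hzq z hzr rfl,
    ?_, fun z hz => (support q hz).mono subset_rfl hq, fun z hz => ?_, a, q.end_mem_support, b,
    r.start_mem_support, hab⟩
  · rw [← Set.ofPred_or]
    simp_rw [← List.mem_append, ← List.coe_toFinset, Set.ncard_coe_finset]
    refine (List.toFinset_card_le _).trans ?_
    rw [← hsupp, SimpleGraph.Walk.length_support]
    exact Nat.succ_le_succ hpn
  · simpa using (support r.reverse (z := z) (by simpa using hz)).mono subset_rfl (by simpa using hr)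

end LinkedWithin

lemma dist_induce_le {x y : T} (h : LinkedWithin G T n x y) : (G.induce T).dist x y ≤ n := by
  obtain ⟨p, hpn, hpT⟩ := h
  refine (SimpleGraph.dist_le (p.induce T hpT)).trans ?_
  rwa [← SimpleGraph.Walk.length_map (SimpleGraph.Embedding.induce T).toHom,
    SimpleGraph.Walk.map_induce]

namespace Linked

lemma exists_linkedWithin (h : Linked G T x y) : ∃ n, LinkedWithin G T n x y :=
  let ⟨p, hT⟩ := h
  ⟨p.length, p, le_rfl, hT⟩

lemma refl (hx : x ∈ T) : Linked G T x x := (LinkedWithin.refl 0 hx).linked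

lemma symm (h : Linked G T x y) : Linked G T y x :=
  let ⟨_, h⟩ := h.exists_linkedWithin
  h.symm.linked

lemma mono (hST : S ⊆ T) (h : Linked G S x y) : Linked G T x y :=
  let ⟨_, h⟩ := h.exists_linkedWithin
  (h.mono hST le_rfl).linked

lemma trans (hxy : Linked G T x y) (hyz : Linked G T y z) : Linked G T x z :=
  let ⟨_, hxy⟩ := hxy.exists_linkedWithin
  let ⟨_, hyz⟩ := hyz.exists_linkedWithin
  (hxy.trans hyz).linked

lemma of_adj (h : G.Adj x y) (hx : x ∈ T) (hy : y ∈ T) : Linked G T x y :=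
  (LinkedWithin.of_adj h hx hy).linked

lemma left_mem (h : Linked G T x y) : x ∈ T :=
  let ⟨_, h⟩ := h.exists_linkedWithin
  h.left_mem

lemma right_mem (h : Linked G T x y) : y ∈ T := h.symm.left_mem

lemma exists_boundary {B : Set V} (h : Linked G T x y) (hx : x ∉ B) (hy : y ∈ B) :
    ∃ a b, Linked G (T \ B) x a ∧ G.Adj a b ∧ b ∈ T ∧ b ∈ B :=
  let ⟨_, h⟩ := h.exists_linkedWithin
  let ⟨_, _, a, b, _, hxa, hab, hb, hby⟩ := h.exists_first_entry hx hy
  ⟨a, b, hxa.linked, hab, hby.left_mem, hb⟩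

lemma mem_of_closed {A : Set V} (h : Linked G T x y) (hx : x ∈ A)
    (hA : ∀ a ∈ A, ∀ b ∈ T, G.Adj a b → b ∈ A) : y ∈ A := by
  by_contra hy
  obtain ⟨a, b, hxa, hab, hbT, hb⟩ := h.exists_boundary (B := Aᶜ) (by simpa using hx) hy
  exact hb (hA a (by simpa using hxa.right_mem.2) b hbT hab)

lemma component (h : Linked G T x y) : Linked G {z | Linked G T x z} x y :=
  h.mem_of_closed (A := {y | Linked G {z | Linked G T x z} x y}) (refl (refl h.left_mem))
    fun _ ha _ hb hab =>
      have hxa := ha.right_mem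
      ha.trans (of_adj hab hxa (hxa.trans (of_adj hab hxa.right_mem hb)))

end Linked

lemma reachable_induce_iff {x y : T} : (G.induce T).Reachable x y ↔ Linked G T x y := by
  constructor
  · rintro ⟨p⟩
    induction p with
    | nil => exact .refl (Subtype.coe_prop _)
    | @cons a b _ hab _ ih => exact (Linked.of_adj (G := G) hab a.2 b.2).trans ih
  · rintro ⟨p, hp⟩
    exact ⟨p.induce T hp⟩

lemma connected_induce_iff :
    (G.induce T).Connected ↔ T.Nonempty ∧ ∀ x ∈ T, ∀ y ∈ T, Linked G T x y := by
  simp [SimpleGraph.connected_iff, SimpleGraph.Preconnected, reachable_induce_iff, and_comm,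
    Set.Nonempty]

lemma connected_induce_of_center (hx : x ∈ T) (h : ∀ y ∈ T, Linked G T x y) :
    (G.induce T).Connected :=
  connected_induce_iff.2 ⟨⟨x, hx⟩, fun y hy z hz => (h y hy).symm.trans (h z hz)⟩

lemma linked_of_connected (hT : (G.induce T).Connected) (hx : x ∈ T) (hy : y ∈ T) :
    Linked G T x y :=
  (connected_induce_iff.1 hT).2 x hx y hy

lemma connected_induce_component (hx : x ∈ T) :
    (G.induce {y | Linked G T x y}).Connected :=
  connected_induce_of_center (Linked.refl hx) fun _ hy => hy.component

lemma connected_induce_insert (hT : (G.induce T).Connected) (hx : x ∈ T) (hxz : G.Adj x z) :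
    (G.induce (insert z T)).Connected := by
  refine connected_induce_of_center (Set.mem_insert_of_mem z hx) ?_
  rintro y (rfl | hy)
  · exact .of_adj hxz (.inr hx) (.inl rfl)
  · exact (linked_of_connected hT hx hy).mono (Set.subset_insert z T)

end Linkage

section Acyclic

variable {V : Type*} {G : SimpleGraph V} {S T : Set V}

/-- Two vertex sets are apart if they are disjoint and no edge of `G` joins them. -/
def Apart (G : SimpleGraph V) (A B : Set V) : Prop :=
  ∀ x ∈ A, ∀ y ∈ B, x ≠ y ∧ ¬ G.Adj x y

lemma Apart.mono {A A' B B' : Set V} (hA : A ⊆ A') (hB : B ⊆ B') (h : Apart G A' B') :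
    Apart G A B :=
  fun x hx y hy => h x (hA hx) y (hB hy)

lemma isAcyclic_induce_mono (hST : S ⊆ T) (hT : (G.induce T).IsAcyclic) :
    (G.induce S).IsAcyclic :=
  hT.embedding (SimpleGraph.induceHomOfLE G hST)

lemma isAcyclic_induce_iff : (G.induce S).IsAcyclic ↔
    ∀ (v : V) (c : G.Walk v v), c.IsCycle → ¬ ∀ x ∈ c.support, x ∈ S := by
  have hinj : Function.Injective (SimpleGraph.Embedding.induce (G := G) S).toHom :=
    Subtype.val_injective
  constructor
  · intro h v c hc hS
    refine h (c.induce S hS) ((SimpleGraph.Walk.isCycle_map_iff_of_injective hinj).1 ?_)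
    exact (SimpleGraph.Walk.map_induce c hS).symm ▸ hc
  · intro h v c hc
    refine h v (c.map (SimpleGraph.Embedding.induce S).toHom) (hc.map hinj) fun x hx => ?_
    obtain ⟨y, -, rfl⟩ := List.mem_map.1 (SimpleGraph.Walk.support_map _ c ▸ hx)
    exact y.2

section Gluing

variable {ι : Type*} {P : ι → Set V} {Z : Set V}

lemma Linked.mem_of_pairwise_apart (hP : Pairwise fun i j => Apart G (P i \ Z) (P j \ Z))
    {i : ι} {x y : V} (h : Linked G ((⋃ i, P i) \ Z) x y) (hx : x ∈ P i) : y ∈ P i := by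
  refine (h.mem_of_closed (A := P i \ Z) ⟨hx, h.left_mem.2⟩ ?_).1
  rintro a ha b ⟨hb, hbZ⟩ hab
  obtain ⟨j, hbj⟩ := Set.mem_iUnion.1 hb
  obtain rfl : i = j := by
    by_contra hij
    exact (hP hij a ha b ⟨hbj, hbZ⟩).2 hab
  exact ⟨hbj, hbZ⟩

lemma exists_support_subset_of_isCycle (hZ : ∀ i, Z ⊆ P i)
    (hP : Pairwise fun i j => Apart G (P i \ Z) (P j \ Z)) {v : V} {c : G.Walk v v}
    (hc : c.IsCycle) (hcP : ∀ x ∈ c.support, x ∈ ⋃ i, P i) (hcZ : ∀ x ∈ c.support, x ∈ Z → x = v) :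
    ∃ i, ∀ x ∈ c.support, x ∈ P i := by
  cases c with
  | nil => exact absurd rfl hc.ne_nil
  | @cons _ a _ hva p =>
    have hp : p.IsPath := ((SimpleGraph.Walk.cons_isCycle_iff p hva).1 hc).1
    simp only [SimpleGraph.Walk.support_cons, List.mem_cons, forall_eq_or_imp] at hcP hcZ ⊢
    obtain ⟨i, hai⟩ := Set.mem_iUnion.1 (hcP.2 a p.start_mem_support)
    have hpi : ∀ x ∈ p.support, x ∈ P i := by
      intro x hx
      by_cases hxZ : x ∈ Z
      · exact hZ i hxZ
      refine Linked.mem_of_pairwise_apart hP ⟨p.takeUntil x hx, fun w hw => ?_⟩ hai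
      have hwp := p.support_takeUntil_subset_support hx hw
      refine ⟨hcP.2 w hwp, fun hwZ => ?_⟩
      obtain rfl := hcZ.2 w hwp hwZ
      exact SimpleGraph.Walk.endpoint_notMem_support_takeUntil hp hx
        (fun hwx => hxZ (hwx ▸ hwZ)) hw
    exact ⟨i, hpi v p.end_mem_support, hpi⟩

lemma isAcyclic_induce_iUnion (hZs : Z.Subsingleton) (hZ : ∀ i, Z ⊆ P i)
    (hac : ∀ i, (G.induce (P i)).IsAcyclic)
    (hP : Pairwise fun i j => Apart G (P i \ Z) (P j \ Z)) :
    (G.induce (⋃ i, P i)).IsAcyclic := by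
  -- A cycle meeting `Z` can be based at its only vertex in `Z`.
  rw [isAcyclic_induce_iff]
  intro v c hc hcP
  obtain ⟨w, c', hc', hcP', hcZ'⟩ : ∃ (w : V) (c' : G.Walk w w), c'.IsCycle ∧
      (∀ x ∈ c'.support, x ∈ ⋃ i, P i) ∧ ∀ x ∈ c'.support, x ∈ Z → x = w := by
    by_cases hz : ∃ z ∈ c.support, z ∈ Z
    · obtain ⟨z, hzc, hzZ⟩ := hz
      exact ⟨z, c.rotate z hzc, hc.rotate hzc, fun x hx => hcP x (by simpa using hx),
        fun x _ hxZ => hZs hxZ hzZ⟩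
    · exact ⟨v, c, hc, hcP, fun x hx hxZ => absurd ⟨x, hx, hxZ⟩ hz⟩
  obtain ⟨i, hi⟩ := exists_support_subset_of_isCycle hZ hP hc' hcP' hcZ'
  exact isAcyclic_induce_iff.1 (hac i) w c' hc' hi

end Gluing

lemma exists_subtree {u v : V} (hT : (G.induce T).IsTree) (huv : G.Adj u v) (hu : u ∈ T)
    (hv : v ∈ T) {m : ℕ} (hm : 2 ≤ m) (hmT : m ≤ T.ncard) :
    ∃ S ⊆ T, u ∈ S ∧ v ∈ S ∧ (G.induce S).IsTree ∧ S.ncard = m := by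
  induction m, hm using Nat.le_induction with
  | base =>
    have huvT : {u, v} ⊆ T := Set.insert_subset hu (Set.singleton_subset_iff.2 hv)
    exact ⟨{u, v}, huvT, by simp, by simp, ⟨SimpleGraph.induce_pair_connected_of_adj huv,
      isAcyclic_induce_mono huvT hT.isAcyclic⟩, Set.ncard_pair huv.ne⟩
  | succ m hm ih =>
    obtain ⟨S, hST, huS, hvS, hS, hSm⟩ := ih (by omega)
    have hSfin : S.Finite := Set.finite_of_ncard_pos (by omega)
    obtain ⟨w, hwT, hwS⟩ := Set.exists_mem_notMem_of_ncard_lt_ncard (hSm.trans_lt hmT) hSfin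
    obtain ⟨z, x, hwz, hzx, -, hxS⟩ :=
      (linked_of_connected hT.connected hwT hu).exists_boundary hwS huS
    have hzST : insert z S ⊆ T := Set.insert_subset hwz.right_mem.1 hST
    exact ⟨insert z S, hzST, .inr huS, .inr hvS,
      ⟨connected_induce_insert hS.connected hxS hzx.symm, isAcyclic_induce_mono hzST hT.isAcyclic⟩,
      by rw [Set.ncard_insert_of_notMem hwz.right_mem.2 hSfin, hSm]⟩

end Acyclic

section StrongForests

variable {V W : Type*} {G : SimpleGraph V} {H : SimpleGraph W} {S T : Set V} {k : ℕ}

lemma mem_forestEdges {u v : V} : s(u, v) ∈ forestEdges G S ↔ G.Adj u v ∧ u ∈ S ∧ v ∈ S := by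
  simp [forestEdges]

lemma ncard_forestEdges (G : SimpleGraph V) (S : Set V) :
    (forestEdges G S).ncard = (G.induce S).edgeSet.ncard := by
  rw [← Set.ncard_image_of_injective _ (Sym2.map.injective Subtype.val_injective)]
  congr 1
  ext e
  constructor
  · induction e with | h u v =>
    rw [mem_forestEdges]
    rintro ⟨huv, hu, hv⟩
    exact ⟨s(⟨u, hu⟩, ⟨v, hv⟩), by simpa using huv, by simp⟩
  · rintro ⟨e, he, rfl⟩
    induction e with | h u v =>
    exact mem_forestEdges.2 ⟨by simpa using he, u.2, v.2⟩

lemma compEdgeCount_add_one [Finite V] (hG : G.IsAcyclic) (v : V) :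
    compEdgeCount G v + 1 = {x | G.Reachable v x}.ncard := by
  have hC : {x | G.Reachable v x} = (G.connectedComponentMk v).supp := by
    ext x
    simp [SimpleGraph.reachable_comm]
  have hcard := (SimpleGraph.isTree_iff_connected_and_card.1
    (hG.isTree_connectedComponent (G.connectedComponentMk v))).2
  calc compEdgeCount G v + 1
      = (G.induce (G.connectedComponentMk v).supp).edgeSet.ncard + 1 := by
        rw [← ncard_forestEdges, ← hC]
        rfl
    _ = {x | G.Reachable v x}.ncard := by
        rw [hC]
        exact hcard

lemma isStrongForest_iff [Finite V] : IsStrongForest G k S ↔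
    (G.induce S).IsAcyclic ∧ ∀ v ∈ S, k < {x | Linked G S v x}.ncard := by
  refine and_congr_right fun hS => ?_
  rw [Subtype.forall]
  refine forall₂_congr fun v hv => ?_
  have hcomp : Subtype.val '' {x | (G.induce S).Reachable ⟨v, hv⟩ x} = {x | Linked G S v x} := by
    ext x
    simpa [reachable_induce_iff] using fun h : Linked G S v x => h.right_mem
  rw [← hcomp, Set.ncard_image_of_injective _ Subtype.val_injective,
    ← compEdgeCount_add_one hS, Nat.lt_succ_iff]

lemma isStrongForest_of_forall_exists_connected [Finite V] (hS : (G.induce S).IsAcyclic)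
    (h : ∀ v ∈ S, ∃ T ⊆ S, v ∈ T ∧ (G.induce T).Connected ∧ k < T.ncard) :
    IsStrongForest G k S := by
  refine isStrongForest_iff.2 ⟨hS, fun v hv => ?_⟩
  obtain ⟨T, hTS, hvT, hT, hcard⟩ := h v hv
  exact hcard.trans_le <| Set.ncard_le_ncard fun x hx =>
    (linked_of_connected hT hvT hx).mono hTS

lemma isStrongForest_of_isTree [Finite V] (hS : (G.induce S).IsTree) (hk : k < S.ncard) :
    IsStrongForest G k S :=
  isStrongForest_of_forall_exists_connected hS.isAcyclic fun _ hv =>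
    ⟨S, subset_rfl, hv, hS.connected, hk⟩

lemma isStrongForest_empty (G : SimpleGraph V) (k : ℕ) : IsStrongForest G k ∅ :=
  ⟨.of_subsingleton, fun v => absurd v.2 (Set.notMem_empty _)⟩

lemma KValid.mem_edgeSet {e : Sym2 V} (h : KValid G k e) : e ∈ G.edgeSet :=
  let ⟨_, _, he⟩ := h
  he.1

lemma KValid.exists_isTree [Finite V] {u v : V} (h : KValid G k s(u, v)) :
    ∃ T, u ∈ T ∧ v ∈ T ∧ (G.induce T).IsTree ∧ k < T.ncard := by
  obtain ⟨S, hS, he⟩ := h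
  obtain ⟨hac, hcard⟩ := isStrongForest_iff.1 hS
  obtain ⟨huv, hu, hv⟩ := mem_forestEdges.1 he
  exact ⟨{x | Linked G S u x}, .refl hu, .of_adj huv hu hv,
    ⟨connected_induce_component hu, isAcyclic_induce_mono (fun _ hx => hx.right_mem) hac⟩,
    hcard u hu⟩

lemma compEdgeCount_iso (φ : G ≃g H) (v : V) : compEdgeCount H (φ v) = compEdgeCount G v := by
  rw [compEdgeCount, compEdgeCount,
    ← Set.ncard_image_of_injective _ (Sym2.map.injective φ.injective)]
  congr 1
  ext e
  induction e with | h x y =>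
  obtain ⟨x, rfl⟩ := φ.surjective x
  obtain ⟨y, rfl⟩ := φ.surjective y
  rw [← Sym2.map_mk, (Sym2.map.injective φ.injective).mem_set_image]
  simp [φ.map_adj_iff, φ.reachable_iff]

/-- An embedding of `G` into `H` restricts to an isomorphism between the subgraphs induced by a
vertex set and by its image. -/
noncomputable def induceImageIso (φ : G ↪g H) (S : Set V) : G.induce S ≃g H.induce (φ '' S) where
  toEquiv := Equiv.Set.image φ S φ.injective
  map_rel_iff' := by simp

lemma isStrongForest_image_iff (φ : G ↪g H) :
    IsStrongForest H k (φ '' S) ↔ IsStrongForest G k S := by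
  refine and_congr (induceImageIso φ S).isAcyclic_iff.symm ?_
  rw [← (induceImageIso φ S).toEquiv.forall_congr_right]
  exact forall_congr' fun v => by
    rw [← compEdgeCount_iso (induceImageIso φ S) v]
    rfl

end StrongForests

section Covers

variable {V : Type*} {G : SimpleGraph V} {k : ℕ}

lemma fStrong_le {ι : Type*} [Fintype ι] (F : ι → Set V) (hF : ∀ i, IsStrongForest G k (F i))
    (hcov : ∀ e, KValid G k e → ∃ i, e ∈ forestEdges G (F i)) :
    fStrong G k ≤ Fintype.card ι := by
  refine Nat.sInf_le ⟨F ∘ (Fintype.equivFin ι).symm, fun _ => hF _, fun e he => ?_⟩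
  obtain ⟨i, hi⟩ := hcov e he
  exact ⟨Fintype.equivFin ι i, by simpa using hi⟩

lemma exists_fStrong_cover [Finite V] (G : SimpleGraph V) (k : ℕ) :
    ∃ F : Fin (fStrong G k) → Set V, (∀ i, IsStrongForest G k (F i)) ∧
      ∀ e, KValid G k e → ∃ i, e ∈ forestEdges G (F i) := by
  refine Nat.sInf_mem (s := {N | ∃ F : Fin N → Set V, (∀ i, IsStrongForest G k (F i)) ∧
    ∀ e, KValid G k e → ∃ i, e ∈ forestEdges G (F i)}) ?_
  obtain ⟨N, ⟨φ⟩⟩ := Finite.exists_equiv_fin {S // IsStrongForest G k S}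
  refine ⟨N, fun i => φ.symm i, fun i => (φ.symm i).2, fun e ⟨S, hS, he⟩ => ?_⟩
  exact ⟨φ ⟨S, hS⟩, by simpa using he⟩

lemma fStrong_le_sum_induce [Finite V] {ι : Type*} [Fintype ι] (hk : 1 ≤ k) (W : ι → Set V)
    (hW : ∀ T, (G.induce T).IsTree → T.ncard = k + 1 → ∃ i, T ⊆ W i) :
    fStrong G k ≤ ∑ i, fStrong (G.induce (W i)) k := by
  choose F hF hcov using fun i => exists_fStrong_cover (G.induce (W i)) k
  let incl (i : ι) := SimpleGraph.Embedding.induce (G := G) (W i)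
  refine (fStrong_le (fun j : Σ i, Fin (fStrong (G.induce (W i)) k) => incl j.1 '' F j.1 j.2)
    (fun j => (isStrongForest_image_iff (incl j.1)).2 (hF j.1 j.2)) fun e he => ?_).trans_eq
    (by simp)
  induction e with | h u v =>
  have huv : G.Adj u v := he.mem_edgeSet
  obtain ⟨T, hu, hv, hT, hTk⟩ := he.exists_isTree
  obtain ⟨T', -, hu', hv', hT', hT'k⟩ := exists_subtree hT huv hu hv (by omega) hTk
  obtain ⟨i, hi⟩ := hW T' hT' hT'k
  have himage : incl i '' (incl i ⁻¹' T') = T' :=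
    Set.image_preimage_eq_of_subset fun x hx => ⟨⟨x, hi hx⟩, rfl⟩
  have hvalid : KValid (G.induce (W i)) k s(⟨u, hi hu'⟩, ⟨v, hi hv'⟩) := by
    refine ⟨incl i ⁻¹' T', (isStrongForest_image_iff (incl i)).1 ?_,
      mem_forestEdges.2 ⟨huv, hu', hv'⟩⟩
    rw [himage]
    exact isStrongForest_of_isTree hT' (by omega)
  obtain ⟨j, hj⟩ := hcov i _ hvalid
  obtain ⟨-, huF, hvF⟩ := mem_forestEdges.1 hj
  exact ⟨⟨i, j⟩, mem_forestEdges.2 ⟨huv, ⟨_, huF, rfl⟩, ⟨_, hvF, rfl⟩⟩⟩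

end Covers

section Treedepth

variable {V : Type*} [PartialOrder V] {G : SimpleGraph V} {d k : ℕ}

/-- The order of `V` is the ancestor order of a rooted forest whose transitive closure
contains `G`, as in the definition of treedepth. -/
structure IsForestOrder (G : SimpleGraph V) : Prop where
  isChain_Iic : ∀ v : V, IsChain (· ≤ ·) (Set.Iic v)
  le_or_le_of_adj : ∀ u v : V, G.Adj u v → u ≤ v ∨ v ≤ u

/-- The number of proper ancestors of `v` in a forest order. -/
noncomputable def depth (v : V) : ℕ := (Set.Iio v).ncard

lemma depth_strictMono [Finite V] : StrictMono (depth : V → ℕ) := fun u _ huv =>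
  Set.ncard_lt_ncard ⟨Set.Iio_subset_Iio huv.le, fun h => lt_irrefl u (h huv)⟩

lemma depth_lt [Finite V] {v : V} (hd : (Set.Iic v).ncard ≤ d) : depth v < d :=
  (Set.ncard_lt_ncard ⟨Set.Iio_subset_Iic_self, fun h => lt_irrefl v (h le_rfl)⟩).trans_le hd

namespace IsForestOrder

variable [Finite V]

lemma eq_of_depth_eq (hG : IsForestOrder G) {x y z : V} (hxz : x ≤ z) (hyz : y ≤ z)
    (hxy : depth x = depth y) : x = y := by
  by_contra hne
  rcases hG.isChain_Iic z hxz hyz hne with h | h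
  · exact (depth_strictMono (h.lt_of_ne hne)).ne hxy
  · exact (depth_strictMono (h.lt_of_ne' hne)).ne' hxy

lemma apart_Ici (hG : IsForestOrder G) {x y : V} (hxy : depth x = depth y) (hne : x ≠ y) :
    Apart G (Set.Ici x) (Set.Ici y) := by
  refine fun a hxa b hyb => ⟨fun hab => hne ?_, fun hab => hne ?_⟩
  · exact hG.eq_of_depth_eq hxa (hab ▸ hyb) hxy
  · rcases hG.le_or_le_of_adj a b hab with h | h
    · exact hG.eq_of_depth_eq (le_trans hxa h) hyb hxy
    · exact hG.eq_of_depth_eq hxa (le_trans hyb h) hxy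

lemma exists_subset_Ici (hG : IsForestOrder G) {T : Set V} (hT : (G.induce T).Connected) :
    ∃ r ∈ T, T ⊆ Set.Ici r := by
  obtain ⟨r, hr⟩ := (Set.toFinite T).exists_minimal (connected_induce_iff.1 hT).1
  refine ⟨r, hr.prop, fun x hx => ?_⟩
  refine (linked_of_connected hT hr.prop hx).mem_of_closed (A := Set.Ici r) le_rfl ?_
  intro a (hra : r ≤ a) b hb hab
  rcases hG.le_or_le_of_adj a b hab with h | h
  · exact hra.trans h
  · rcases (hG.isChain_Iic a).total hra h with h | h
    · exact h
    · exact hr.le_of_le hb h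

end IsForestOrder

/-- A tree rooted at `r` that has at least `k` edges and contains only descendants of `r`. -/
structure IsStrongTreeAbove (G : SimpleGraph V) (k : ℕ) (r : V) (Q : Set V) : Prop where
  isTree : (G.induce Q).IsTree
  lt_ncard : k < Q.ncard
  subset_Ici : Q ⊆ Set.Ici r

/-- A tree with at least one edge that contains `r` and is otherwise contained in the subtree
of the forest order rooted at `y`. -/
structure IsBranch (G : SimpleGraph V) (r y : V) (Q : Set V) : Prop where
  root_mem : r ∈ Q
  isTree : (G.induce Q).IsTree
  subset_Ici : Q \ {r} ⊆ Set.Ici y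
  nonempty : (Q \ {r}).Nonempty

/-- The proper descendants `y` of `r` of depth `i` whose subtree holds a branch at `r`. -/
def attached (G : SimpleGraph V) (r : V) (i : ℕ) : Set V :=
  {y | r < y ∧ depth y = i ∧ ∃ Q, IsBranch G r y Q}

/-- `y` is attached to `r`, together with fewer than `k` vertices of its depth. -/
def Rare (G : SimpleGraph V) (k : ℕ) (r y : V) : Prop :=
  y ∈ attached G r (depth y) ∧ (attached G r (depth y)).ncard < k

namespace IsForestOrder

open Relation (ReflTransGen)

lemma exists_branch (hG : IsForestOrder G) {T : Set V} (hT : (G.induce T).IsTree) {u v y z : V}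
    (hz : z ∈ T) (hyz : ¬ y ≤ z) (hu : u ∈ T) (hv : v ∈ T) (huv : G.Adj u v) (hyv : y ≤ v) :
    ∃ r ∈ T, r < y ∧ ∃ Q, IsBranch G r y Q ∧ u ∈ Q ∧ v ∈ Q := by
  set D : Set V := {x | Linked G (T ∩ Set.Ici y) v x} with hD
  have hvD : v ∈ D := .refl ⟨hv, hyv⟩
  have hDT : ∀ x ∈ D, x ∈ T ∧ y ≤ x := fun x hx => hx.right_mem
  obtain ⟨x, r, hxD, hxr, hrT, hyr, hur⟩ :
      ∃ x r, x ∈ D ∧ G.Adj x r ∧ r ∈ T ∧ ¬ y ≤ r ∧ (u = r ∨ u ∈ D) := by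
    by_cases hyu : y ≤ u
    · obtain ⟨x, r, hvx, hxr, hr, hyr⟩ := (linked_of_connected hT.connected hv hz).exists_boundary
        (B := (Set.Ici y)ᶜ) (by simpa using hyv) (by simpa using hyz)
      exact ⟨x, r, by simpa [hD, Set.sdiff_compl] using hvx, hxr, hr, hyr,
        .inr (.of_adj huv.symm ⟨hv, hyv⟩ ⟨hu, hyu⟩)⟩
    · exact ⟨v, u, hvD, huv.symm, hu, hyu, .inl rfl⟩
  have hrx : r ≤ x := (hG.le_or_le_of_adj x r hxr).resolve_left
    fun h => hyr ((hDT x hxD).2.trans h)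
  have hry : r < y := (((hG.isChain_Iic x).total hrx (hDT x hxD).2).resolve_right hyr).lt_of_not_ge
    hyr
  have hrD : r ∉ D := fun h => hyr (hDT r h).2
  have hQT : insert r D ⊆ T := Set.insert_subset hrT fun x hx => (hDT x hx).1
  refine ⟨r, hrT, hry, insert r D, ⟨.inl rfl, ⟨?_, isAcyclic_induce_mono hQT hT.isAcyclic⟩, ?_, ?_⟩,
    hur, .inr hvD⟩
  · exact connected_induce_insert (connected_induce_component ⟨hv, hyv⟩) hxD hxr
  · rintro w ⟨rfl | hw, hwr⟩
    exacts [absurd rfl hwr, (hDT w hw).2]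
  · exact ⟨v, .inr hvD, fun h => hrD (h ▸ hvD)⟩

variable [Finite V]

lemma isStrongForest_iUnion (hG : IsForestOrder G) {g : V → Set V}
    (hg : ∀ r, g r = ∅ ∨ IsStrongTreeAbove G k r (g r)) (j : ℕ) :
    IsStrongForest G k (⋃ r : {r : V // depth r = j}, g r) := by
  have hIci : ∀ r, g r ⊆ Set.Ici r := fun r =>
    (hg r).elim (fun h => h ▸ Set.empty_subset _) IsStrongTreeAbove.subset_Ici
  have hac : ∀ r, (G.induce (g r)).IsAcyclic := fun r =>
    (hg r).elim (fun h => h ▸ (isStrongForest_empty G k).1) fun h => h.isTree.isAcyclic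
  refine isStrongForest_of_forall_exists_connected ?_ fun v hv => ?_
  · refine isAcyclic_induce_iUnion Set.subsingleton_empty (fun _ => Set.empty_subset _)
      (fun r => hac r) fun r s hrs => ?_
    exact (hG.apart_Ici (r.2.trans s.2.symm) (Subtype.coe_injective.ne hrs)).mono
      (Set.sdiff_subset.trans (hIci r)) (Set.sdiff_subset.trans (hIci s))
  · obtain ⟨r, hvr⟩ := Set.mem_iUnion.1 hv
    obtain h | h := hg r
    · exact absurd (h ▸ hvr) (Set.notMem_empty v)
    · exact ⟨g r, Set.subset_iUnion (fun r : {r : V // depth r = j} => g r) r, hvr,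
        h.isTree.connected, h.lt_ncard⟩

lemma isStrongTreeAbove_iUnion_branch (hG : IsForestOrder G) {r : V} {i : ℕ} {B : V → Set V}
    (hB : ∀ y ∈ attached G r i, IsBranch G r y (B y)) (hk : k ≤ (attached G r i).ncard)
    (hne : (attached G r i).Nonempty) :
    IsStrongTreeAbove G k r (⋃ y : attached G r i, B y) := by
  have hsub (y : attached G r i) : B y ⊆ ⋃ y : attached G r i, B y :=
    Set.subset_iUnion (fun y : attached G r i => B y) y
  have hr : r ∈ ⋃ y : attached G r i, B y := hsub ⟨_, hne.some_mem⟩ (hB _ hne.some_mem).root_mem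
  have hapart : Pairwise fun y z : attached G r i => Apart G (B y \ {r}) (B z \ {r}) :=
    fun y z hyz => (hG.apart_Ici (y.2.2.1.trans z.2.2.1.symm) (Subtype.coe_injective.ne hyz)).mono
      (hB y y.2).subset_Ici (hB z z.2).subset_Ici
  refine ⟨⟨connected_induce_of_center hr fun x hx => ?_, ?_⟩, ?_, fun x hx => ?_⟩
  · obtain ⟨y, hxy⟩ := Set.mem_iUnion.1 hx
    have hy := hB y y.2
    exact (linked_of_connected hy.isTree.connected hy.root_mem hxy).mono (hsub y)
  · exact isAcyclic_induce_iUnion Set.subsingleton_singleton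
      (fun y => Set.singleton_subset_iff.2 (hB y y.2).root_mem)
      (fun y => (hB y y.2).isTree.isAcyclic) hapart
  · choose x hx using fun y : attached G r i => (hB y y.2).nonempty
    have hinj : Function.Injective x := by
      intro y z hyz
      by_contra hne
      exact (hapart hne _ (hx y) _ (hx z)).1 hyz
    have hrange : Set.range x ⊆ (⋃ y : attached G r i, B y) \ {r} := by
      rintro _ ⟨y, rfl⟩
      exact ⟨hsub y (hx y).1, (hx y).2⟩
    calc k ≤ (Set.range x).ncard := by
          rwa [← Nat.card_coe_set_eq, Nat.card_range_of_injective hinj, Nat.card_coe_set_eq]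
      _ ≤ ((⋃ y : attached G r i, B y) \ {r}).ncard := Set.ncard_le_ncard hrange
      _ < (⋃ y : attached G r i, B y).ncard := Set.ncard_sdiff_singleton_lt_of_mem hr
  · obtain ⟨y, hxy⟩ := Set.mem_iUnion.1 hx
    by_cases hxr : x = r
    · exact hxr.ge
    · exact y.2.1.le.trans ((hB y y.2).subset_Ici ⟨hxy, hxr⟩)

lemma exists_frequent_branch (hG : IsForestOrder G) {T : Set V} (hT : (G.induce T).IsTree)
    {ρ u v : V} (hρ : ρ ∈ T) (hTρ : T ⊆ Set.Ici ρ) (hu : u ∈ T) (hv : v ∈ T) (huv : G.Adj u v)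
    (hρv : ¬ ReflTransGen (Rare G k) ρ v) :
    ∃ r y Q, y ∈ attached G r (depth y) ∧ k ≤ (attached G r (depth y)).ncard ∧
      IsBranch G r y Q ∧ u ∈ Q ∧ v ∈ Q ∧ ReflTransGen (Rare G k) y v := by
  suffices ∀ y, ρ ≤ y → y ≤ v → ReflTransGen (Rare G k) y v → _ from this v (hTρ hv) le_rfl .refl
  intro y hρy hyv hreach
  induction y using WellFoundedLT.induction with
  | ind y ih =>
    have hyρ : ¬ y ≤ ρ := fun h => hρv (le_antisymm hρy h ▸ hreach)
    obtain ⟨r, hrT, hry, Q, hQ, huQ, hvQ⟩ := hG.exists_branch hT hρ hyρ hu hv huv hyv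
    have hy : y ∈ attached G r (depth y) := ⟨hry, rfl, Q, hQ⟩
    by_cases hk : k ≤ (attached G r (depth y)).ncard
    · exact ⟨r, y, Q, hy, hk, hQ, huQ, hvQ, hreach⟩
    · exact ih r hry (hTρ hrT) (hry.le.trans hyv) (.head ⟨hy, not_le.1 hk⟩ hreach)

end IsForestOrder

section Counting

open Relation (ReflTransGen)

variable [Finite V]

lemma ncard_rare_le (hd : ∀ v : V, (Set.Iic v).ncard ≤ d) (r : V) :
    {y | Rare G k r y}.ncard ≤ d * k := by
  have hsub : {y | Rare G k r y} ⊆ ⋃ i ∈ Finset.range d, {y | Rare G k r y ∧ depth y = i} :=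
    fun y hy => by simpa using ⟨hy, depth_lt (hd y)⟩
  have hlevel : ∀ i, {y | Rare G k r y ∧ depth y = i}.ncard ≤ k := by
    intro i
    obtain h | ⟨y, hy, rfl⟩ := {y | Rare G k r y ∧ depth y = i}.eq_empty_or_nonempty
    · simp [h]
    · refine (Set.ncard_le_ncard ?_).trans hy.2.le
      exact fun x ⟨hx, hxy⟩ => hxy ▸ hx.1
  calc {y | Rare G k r y}.ncard
      ≤ (⋃ i ∈ Finset.range d, {y | Rare G k r y ∧ depth y = i}).ncard := Set.ncard_le_ncard hsub
    _ ≤ ∑ i ∈ Finset.range d, {y | Rare G k r y ∧ depth y = i}.ncard :=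
        Finset.set_ncard_biUnion_le _ _
    _ ≤ d * k := by simpa using Finset.sum_le_card_nsmul (Finset.range d) _ k fun i _ => hlevel i

lemma ncard_reflTransGen_rare_le (hd : ∀ v : V, (Set.Iic v).ncard ≤ d) (z : V) :
    {v | ReflTransGen (Rare G k) z v}.ncard ≤ (d * k + 1) ^ d := by
  have hlt := fun v : V => depth_lt (hd v)
  have := ncard_le_pow_of_branching (D := fun m z => {v | ReflTransGen (Rare G k) z v ∧
    d ≤ depth z + m}) (ncard_rare_le (G := G) (k := k) hd) ?_ ?_ d z
  · simpa using this
  · rintro z v ⟨-, hz⟩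
    exact absurd hz (hlt z).not_ge
  · rintro m z v ⟨hzv, hz⟩
    obtain rfl | ⟨y, hzy, hyv⟩ := hzv.cases_head
    · exact .inl rfl
    · have hdepth : depth z < depth y := depth_strictMono hzy.1.1
      exact .inr (Set.mem_biUnion hzy ⟨hyv, by omega⟩)

lemma IsForestOrder.exists_covering_family (hG : IsForestOrder G)
    (hd : ∀ v : V, (Set.Iic v).ncard ≤ d) (z : V) {P : Set V → Prop} (hP : ∃ Q, P Q) :
    ∃ g : Fin ((d * k + 1) ^ d * d) → Set V, (∀ t, P (g t)) ∧ ∀ u v Q, P Q → u ∈ Q → v ∈ Q →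
      u ≤ v → ReflTransGen (Rare G k) z v → ∃ t, u ∈ g t ∧ v ∈ g t := by
  set E : Set (V × V) := {p | p.1 ≤ p.2 ∧ ReflTransGen (Rare G k) z p.2}
  have hEcard : E.ncard ≤ (d * k + 1) ^ d * d := calc
    E.ncard ≤ ({v | ReflTransGen (Rare G k) z v} ×ˢ Set.Iio d).ncard := by
      refine Set.ncard_le_ncard_of_injOn (fun p => (p.2, depth p.1))
        (fun p hp => ⟨hp.2, depth_lt (hd p.1)⟩) ?_ ((Set.toFinite _).prod (Set.finite_Iio d))
      rintro ⟨u, v⟩ huv ⟨u', v'⟩ huv' heq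
      obtain ⟨rfl, hdepth⟩ := Prod.mk.inj heq
      exact Prod.ext (hG.eq_of_depth_eq huv.1 huv'.1 hdepth) rfl
    _ ≤ (d * k + 1) ^ d * d := by
      rw [Set.ncard_prod, Set.ncard_Iio_nat]
      gcongr
      exact ncard_reflTransGen_rare_le hd z
  obtain ⟨g, hgP, hg⟩ := exists_fin_family
    (E := {p ∈ E | ∃ Q, P Q ∧ p.1 ∈ Q ∧ p.2 ∈ Q}) (Set.toFinite _)
    ((Set.ncard_le_ncard (Set.sep_subset _ _)).trans hEcard) hP fun _ hp => hp.2
  exact ⟨g, hgP, fun u v Q hQ hu hv huv hzv => hg (u, v) ⟨⟨huv, hzv⟩, Q, hQ, hu, hv⟩⟩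

end Counting

section Cover

open Relation (ReflTransGen)

variable [Finite V]

lemma IsForestOrder.exists_bouquets (hG : IsForestOrder G) (hd : ∀ v : V, (Set.Iic v).ncard ≤ d)
    (k : ℕ) (r : V) (i : ℕ) :
    ∃ b : Fin ((d * k + 1) ^ d * d) → Set V, (∀ t, b t = ∅ ∨ IsStrongTreeAbove G k r (b t)) ∧
      (k ≤ (attached G r i).ncard → ∀ y ∈ attached G r i, ∀ u v Q, IsBranch G r y Q → u ∈ Q →
        v ∈ Q → u ≤ v → ReflTransGen (Rare G k) y v → ∃ t, u ∈ b t ∧ v ∈ b t) := by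
  by_cases h : k ≤ (attached G r i).ncard ∧ (attached G r i).Nonempty
  · have hfam (y : V) (hy : y ∈ attached G r i) :=
      hG.exists_covering_family (k := k) hd y hy.2.2
    choose! g hgQ hg using hfam
    refine ⟨fun t => ⋃ y : attached G r i, g y t, fun t => .inr ?_,
      fun _ y hy u v Q hQ hu hv huv hyv => ?_⟩
    · exact hG.isStrongTreeAbove_iUnion_branch (fun y hy => hgQ y hy t) h.1 h.2
    · obtain ⟨t, hut, hvt⟩ := hg y hy u v Q hQ hu hv huv hyv
      exact ⟨t, Set.mem_iUnion.2 ⟨⟨y, hy⟩, hut⟩, Set.mem_iUnion.2 ⟨⟨y, hy⟩, hvt⟩⟩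
  · exact ⟨fun _ => ∅, fun _ => .inl rfl, fun hk y hy => absurd ⟨hk, y, hy⟩ h⟩

lemma IsForestOrder.exists_strongTreeAbove_families (hG : IsForestOrder G)
    (hd : ∀ v : V, (Set.Iic v).ncard ≤ d) (k : ℕ) :
    ∃ H : Option (Fin d) → Fin ((d * k + 1) ^ d * d) → V → Set V,
      (∀ i t r, H i t r = ∅ ∨ IsStrongTreeAbove G k r (H i t r)) ∧
      ∀ u v, u ≤ v → KValid G k s(u, v) → ∃ i t r, u ∈ H i t r ∧ v ∈ H i t r := by
  choose g hgQ hg using fun r => hG.exists_covering_family (k := k) hd r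
    (P := fun Q => Q = ∅ ∨ IsStrongTreeAbove G k r Q) ⟨∅, .inl rfl⟩
  choose b hbQ hb using hG.exists_bouquets hd k
  refine ⟨fun i t r => i.elim (g r t) fun i => b r i t, ?_, fun u v huv he => ?_⟩
  · rintro (_ | i) t r
    exacts [hgQ r t, hbQ r i t]
  · obtain ⟨T, hu, hv, hT, hTk⟩ := he.exists_isTree
    obtain ⟨ρ, hρ, hTρ⟩ := hG.exists_subset_Ici hT.connected
    by_cases hρv : ReflTransGen (Rare G k) ρ v
    · obtain ⟨t, ht⟩ := hg ρ u v T (.inr ⟨hT, hTk, hTρ⟩) hu hv huv hρv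
      exact ⟨none, t, ρ, ht⟩
    · obtain ⟨r, y, Q, hy, hk, hQ, huQ, hvQ, hyv⟩ :=
        hG.exists_frequent_branch hT hρ hTρ hu hv he.mem_edgeSet hρv
      obtain ⟨t, ht⟩ := hb r (depth y) hk y hy u v Q hQ huQ hvQ huv hyv
      exact ⟨some ⟨depth y, depth_lt (hd y)⟩, t, r, ht⟩

-- The factors count the depths of the roots, the kinds of trees (any tree, or bouquets of branches
-- attached at one of the `d` depths), and the members of a covering family.
lemma IsForestOrder.fStrong_le (hG : IsForestOrder G) (hd : ∀ v : V, (Set.Iic v).ncard ≤ d)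
    (k : ℕ) : fStrong G k ≤ d * ((d + 1) * ((d * k + 1) ^ d * d)) := by
  obtain ⟨H, hH, hcov⟩ := hG.exists_strongTreeAbove_families hd k
  refine (InducedArboricity.fStrong_le
    (fun p : Fin d × Option (Fin d) × Fin ((d * k + 1) ^ d * d) =>
      ⋃ r : {r : V // depth r = p.1}, H p.2.1 p.2.2 r)
    (fun p => hG.isStrongForest_iUnion (hH p.2.1 p.2.2) p.1) fun e he => ?_).trans_eq (by simp)
  suffices ∃ i t r, ∀ x ∈ e, x ∈ H i t r by
    obtain ⟨i, t, r, hr⟩ := this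
    exact ⟨⟨⟨depth r, depth_lt (hd r)⟩, i, t⟩, he.mem_edgeSet,
      fun x hx => Set.mem_iUnion.2 ⟨⟨r, rfl⟩, hr x hx⟩⟩
  induction e with | h u v =>
  rcases hG.le_or_le_of_adj u v he.mem_edgeSet with huv | hvu
  · simpa using hcov u v huv he
  · simpa [and_comm] using hcov v u hvu (Sym2.eq_swap ▸ he)

end Cover

end Treedepth

lemma fStrong_le_of_hasTreedepthAtMost {V : Type*} [Finite V] {G : SimpleGraph V} {d : ℕ}
    (h : HasTreedepthAtMost G d) (k : ℕ) :
    fStrong G k ≤ d * ((d + 1) * ((d * k + 1) ^ d * d)) := by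
  obtain ⟨le, hle, hchain, hadj, hd⟩ := h
  let : PartialOrder V :=
    { le := le
      le_refl := hle.refl
      le_trans := hle.trans
      le_antisymm := hle.antisymm }
  exact IsForestOrder.fStrong_le ⟨hchain, hadj⟩ hd k

section BranchSystems

variable {V ι : Type*} {G : SimpleGraph V} {R a : ℕ} {c : ι → V} {B : ι → Set V}

/-- Every `R`-shallow minor of `G` has at most `a` times as many edges as vertices. -/
def ShallowMinorsSparse (G : SimpleGraph V) (R a : ℕ) : Prop :=
  ∀ (m : ℕ) (Γ : SimpleGraph (Fin m)), IsShallowMinor R Γ G → Γ.edgeSet.ncard ≤ a * m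

/-- Disjoint branch sets `B i` in which every vertex is reached from the center `c i` by a walk
of length at most `R`, as in the definition of a shallow minor. -/
structure IsBranchSystem (G : SimpleGraph V) (R : ℕ) (c : ι → V) (B : ι → Set V) : Prop where
  center_mem : ∀ i, c i ∈ B i
  linkedWithin : ∀ i, ∀ y ∈ B i, LinkedWithin G (B i) R (c i) y
  pairwise_disjoint : Pairwise (Disjoint on B)

/-- The graph obtained from `G` by contracting the branch sets `B i` and deleting all other
vertices. -/
def contract (G : SimpleGraph V) (B : ι → Set V) : SimpleGraph ι where
  Adj i j := i ≠ j ∧ ∃ x ∈ B i, ∃ y ∈ B j, G.Adj x y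
  symm := ⟨fun _ _ ⟨hij, x, hx, y, hy, hxy⟩ => ⟨hij.symm, y, hy, x, hx, hxy.symm⟩⟩
  loopless := ⟨fun _ h => h.1 rfl⟩

lemma contract_mono {B' : ι → Set V} (h : B ≤ B') : contract G B ≤ contract G B' :=
  fun i j ⟨hij, x, hx, y, hy, hxy⟩ => ⟨hij, x, h i hx, y, h j hy, hxy⟩

namespace IsBranchSystem

lemma isShallowMinor (hB : IsBranchSystem G R c B) {Γ : SimpleGraph ι} (hΓ : Γ ≤ contract G B) :
    IsShallowMinor R Γ G :=
  ⟨B, hB.pairwise_disjoint,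
    fun i => ⟨⟨c i, hB.center_mem i⟩, fun y =>
      have h := hB.linkedWithin i y y.2
      ⟨reachable_induce_iff.2 h.linked, dist_induce_le h⟩⟩,
    fun _ _ hij => (hΓ hij).2⟩

lemma reindex {κ : Type*} (hB : IsBranchSystem G R c B) (e : κ ≃ ι) :
    IsBranchSystem G R (c ∘ e) (B ∘ e) :=
  ⟨fun _ => hB.center_mem _, fun _ => hB.linkedWithin _,
    fun _ _ hij => hB.pairwise_disjoint (e.injective.ne hij)⟩

lemma ncard_edgeSet_le [Finite ι] (hB : IsBranchSystem G R c B) (hG : ShallowMinorsSparse G R a)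
    {Γ : SimpleGraph ι} (hΓ : Γ ≤ contract G B) : Γ.edgeSet.ncard ≤ a * Nat.card ι := by
  have := Fintype.ofFinite ι
  let φ := Γ.overFinIso (Nat.card_eq_fintype_card (α := ι)).symm
  rw [← Nat.card_coe_set_eq, Nat.card_congr φ.mapEdgeSet, Nat.card_coe_set_eq]
  refine hG _ _ ((hB.reindex φ.symm.toEquiv).isShallowMinor fun i j hij => ?_)
  obtain ⟨hne, h⟩ := hΓ (φ.symm.map_adj_iff.2 hij)
  exact ⟨fun h => hne (congrArg _ h), h⟩

lemma enlarge [DecidableEq ι] (hB : IsBranchSystem G R c B) {Z A : Set V} {i : ι}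
    (hBZ : ∀ j, B j ⊆ Z) (hA : ∀ y ∈ A, LinkedWithin G A R (c i) y)
    (hAZ : A ⊆ insert (c i) Zᶜ) :
    IsBranchSystem G R c (Function.update B i (B i ∪ A)) := by
  have hdisj : ∀ j ≠ i, Disjoint (B i ∪ A) (B j) := by
    refine fun j hji => Set.disjoint_union_left.2 ⟨hB.pairwise_disjoint hji.symm,
      Set.disjoint_left.2 fun x hxA hxj => ?_⟩
    rcases hAZ hxA with rfl | hxZ
    · exact Set.disjoint_left.1 (hB.pairwise_disjoint hji) hxj (hB.center_mem i)
    · exact hxZ (hBZ j hxj)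
  refine ⟨fun j => ?_, fun j => ?_, fun j k hjk => ?_⟩
  · obtain rfl | hji := eq_or_ne j i
    · simpa using .inl (hB.center_mem j)
    · simpa [hji] using hB.center_mem j
  · obtain rfl | hji := eq_or_ne j i
    · rw [Function.update_self]
      rintro y (hy | hy)
      · exact (hB.linkedWithin j y hy).mono Set.subset_union_left le_rfl
      · exact (hA y hy).mono Set.subset_union_right le_rfl
    · simpa [hji] using hB.linkedWithin j
  · obtain rfl | hji := eq_or_ne j i
    · simpa [Function.onFun, hjk.symm] using hdisj k hjk.symm
    · obtain rfl | hki := eq_or_ne k i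
      · simpa [Function.onFun, hji] using (hdisj j hji).symm
      · simpa [Function.onFun, hji, hki] using hB.pairwise_disjoint hjk

end IsBranchSystem

/-- A candidate for the maximal packing in `exists_scattered`: a branch system with centers `S`
inside `Z` whose contraction contains `Γ`, where `Z` arises from `S` by adding at most `2 * R + 1`
vertices for each edge of `Γ`. -/
structure IsPacking (G : SimpleGraph V) (R : ℕ) {S : Set V} (Γ : SimpleGraph S) (B : S → Set V)
    (Z : Set V) : Prop where
  isBranchSystem : IsBranchSystem G R Subtype.val B
  le_contract : Γ ≤ contract G B
  subset : S ⊆ Z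
  branch_subset : ∀ v, B v ⊆ Z
  ncard_le : Z.ncard ≤ S.ncard + (2 * R + 1) * Γ.edgeSet.ncard

lemma isPacking_bot (G : SimpleGraph V) (R : ℕ) (S : Set V) :
    IsPacking G R (⊥ : SimpleGraph S) (fun v => {↑v}) S where
  isBranchSystem :=
    ⟨fun _ => rfl, fun _ _ hy => Set.mem_singleton_iff.1 hy ▸ .refl R rfl, fun _ _ hij =>
      Set.disjoint_singleton.2 (Subtype.val_injective.ne hij)⟩
  le_contract := bot_le
  subset := subset_rfl
  branch_subset v := Set.singleton_subset_iff.2 v.2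
  ncard_le := Nat.le_add_right ..

lemma IsPacking.exists_gt [Finite V] {S Z : Set V} {Γ : SimpleGraph S} {B : S → Set V}
    (h : IsPacking G R Γ B Z) {u v : S} (huv : u ≠ v) (hΓ : ¬ Γ.Adj u v)
    (hlink : LinkedWithin G (Zᶜ ∪ {↑u, ↑v}) (2 * R) u v) :
    ∃ Γ' > Γ, ∃ B' Z', IsPacking G R Γ' B' Z' := by
  obtain ⟨A, A', hA, hA', hdisj, hcard, hAu, hAv, x, hx, y, hy, hxy⟩ :=
    hlink.exists_bisection (Subtype.val_injective.ne huv)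
  have huA : (u : V) ∈ A := (hAu x hx).left_mem
  have hvA' : (v : V) ∈ A' := (hAv y hy).left_mem
  have hAZ : A ⊆ insert ↑u Zᶜ := fun z hz => by
    rcases hA hz with hz' | rfl | rfl
    exacts [.inr hz', .inl rfl, (Set.disjoint_left.1 hdisj hz hvA').elim]
  have hAZ' : A' ⊆ insert ↑v (Z ∪ A)ᶜ := fun z hz => by
    have hzA := Set.disjoint_right.1 hdisj hz
    rcases hA' hz with hz' | rfl | rfl
    exacts [.inr fun h => h.elim hz' hzA, (hzA huA).elim, .inl rfl]
  set B₁ := Function.update B u (B u ∪ A)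
  set B₂ := Function.update B₁ v (B₁ v ∪ A')
  have hB₁ : B ≤ B₁ := le_update_iff.2 ⟨Set.subset_union_left, fun _ _ => le_rfl⟩
  have hB₂ : B₁ ≤ B₂ := le_update_iff.2 ⟨Set.subset_union_left, fun _ _ => le_rfl⟩
  have hB₁Z : ∀ w, B₁ w ⊆ Z ∪ A := update_le_iff.2
    ⟨Set.union_subset_union_left A (h.branch_subset u),
      fun w _ => (h.branch_subset w).trans Set.subset_union_left⟩
  have hadj : (contract G B₂).Adj u v := by
    refine ⟨huv, x, hB₂ u ?_, y, ?_, hxy⟩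
    · simp [B₁, hx]
    · simp [B₂, hy]
  refine ⟨Γ ⊔ SimpleGraph.edge u v, ?_, B₂, Z ∪ A ∪ A', ?_⟩
  · exact left_lt_sup.2 fun hle => hΓ (hle (by simp [SimpleGraph.edge_adj, huv]))
  refine ⟨(h.isBranchSystem.enlarge h.branch_subset hAu hAZ).enlarge hB₁Z hAv hAZ', ?_, ?_, ?_, ?_⟩
  · refine sup_le (h.le_contract.trans (contract_mono (hB₁.trans hB₂))) ?_
    rwa [SimpleGraph.edge_le_iff, or_iff_right huv]
  · exact h.subset.trans (Set.subset_union_left.trans Set.subset_union_left)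
  · exact update_le_iff.2 ⟨Set.union_subset_union_left A' (hB₁Z v),
      fun w _ => (hB₁Z w).trans Set.subset_union_left⟩
  · rw [SimpleGraph.edgeSet_sup, SimpleGraph.edgeSet_edge_of_ne huv, Set.union_singleton,
      Set.ncard_insert_of_notMem (by simpa using hΓ), Set.union_assoc]
    have := Set.ncard_union_le Z (A ∪ A')
    linarith [h.ncard_le]

/-- Distinct vertices of `I` are not joined by a walk of length at most `2 * R` whose inner
vertices avoid `Z`. -/
def Scattered (G : SimpleGraph V) (R : ℕ) (Z I : Set V) : Prop :=
  I.Pairwise fun u v => ¬ LinkedWithin G (Zᶜ ∪ {u, v}) (2 * R) u v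

lemma exists_scattered [Finite V] (hG : ShallowMinorsSparse G R a) (S : Set V) :
    ∃ Z I, S ⊆ Z ∧ I ⊆ S ∧ Scattered G R Z I ∧ Z.ncard ≤ (1 + (2 * R + 1) * a) * S.ncard ∧
      S.ncard ≤ 2 * (4 * a + 1) * I.ncard := by
  obtain ⟨Γ, hΓ⟩ := (Set.toFinite {Γ : SimpleGraph S | ∃ B Z, IsPacking G R Γ B Z}).exists_maximal
    ⟨⊥, _, _, isPacking_bot G R S⟩
  obtain ⟨B, Z, h⟩ := hΓ.prop
  have hcard := h.isBranchSystem.ncard_edgeSet_le hG h.le_contract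
  obtain ⟨I, hI, hSI⟩ := exists_isIndepSet_of_ncard_edgeSet_le hcard
  rw [Nat.card_coe_set_eq] at hcard hSI
  refine ⟨Z, Subtype.val '' I, h.subset, Subtype.coe_image_subset S I, ?_, ?_, ?_⟩
  · rintro _ ⟨u, hu, rfl⟩ _ ⟨v, hv, rfl⟩ huv hlink
    obtain ⟨Γ', hlt, hΓ'⟩ :=
      h.exists_gt (ne_of_apply_ne _ huv) (hI hu hv (ne_of_apply_ne _ huv)) hlink
    exact hΓ.not_gt hΓ' hlt
  · calc Z.ncard ≤ S.ncard + (2 * R + 1) * (a * S.ncard) := by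
          grw [← hcard]
          exact h.ncard_le
      _ = (1 + (2 * R + 1) * a) * S.ncard := by ring
  · rwa [Set.ncard_image_of_injective _ Subtype.val_injective]

/-- The branch set at `v ∈ Z` of the minor in `exists_separates`: the vertices reached from `v`
by walks of length at most `R` that leave `Z` at once if `v ∈ I`, and `v` alone otherwise. -/
def outerBall (G : SimpleGraph V) (R : ℕ) (Z I : Set V) (v : Z) : Set V :=
  {x | (↑v ∈ I ∨ x = v) ∧ LinkedWithin G (insert ↑v Zᶜ) R v x}

lemma isBranchSystem_outerBall {Z I : Set V} (hI : Scattered G R Z I) :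
    IsBranchSystem G R Subtype.val (outerBall G R Z I) := by
  refine ⟨fun v => ⟨.inr rfl, .refl R (.inl rfl)⟩, ?_, ?_⟩
  · rintro v y ⟨hv | rfl, hy⟩
    · exact hy.ball.mono (fun z hz => ⟨.inl hv, hz⟩) le_rfl
    · exact .refl R ⟨.inr rfl, hy⟩
  · refine fun v w hvw => Set.disjoint_left.2 fun x ⟨hv, hvx⟩ ⟨hw, hwx⟩ => ?_
    have hxv : x ≠ v := by
      rintro rfl
      exact hwx.right_mem.elim (fun h => hvw (Subtype.ext h)) fun h => h v.2
    have hxw : x ≠ w := by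
      rintro rfl
      exact hvx.right_mem.elim (fun h => hvw (Subtype.ext h.symm)) fun h => h w.2
    refine hI (hv.resolve_right hxv) (hw.resolve_right hxw) (Subtype.val_injective.ne hvw) ?_
    rw [two_mul]
    exact (hvx.mono (by grind) le_rfl).trans (hwx.symm.mono (by grind) le_rfl)

lemma Scattered.exists_adj_contract {T Z I : Set V} (hI : Scattered G R Z I) {v : Z} (hv : ↑v ∈ I)
    {u : V} (hu : u ∈ Z) (huv : u ≠ v) (h : LinkedWithin G T R v u) :
    ∃ b : Z, ↑b ∈ T ∧ ↑b ∉ I ∧ (contract G (outerBall G R Z I)).Adj v b := by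
  obtain ⟨i, j, x, b, hij, hvx, hxb, ⟨hbZ, hbv⟩, hbu⟩ :=
    h.exists_first_entry (B := Z \ {↑v}) (by simp) ⟨hu, huv⟩
  replace hvx : LinkedWithin G (insert ↑v Zᶜ) i v x := hvx.mono (by grind) le_rfl
  refine ⟨⟨b, hbZ⟩, hbu.left_mem, fun hbI => hI hv hbI (Ne.symm hbv) ?_,
    Subtype.coe_ne_coe.1 (Ne.symm hbv), x, ⟨.inl hv, hvx.mono subset_rfl (by omega)⟩, b,
    ⟨.inr rfl, .refl R (.inl rfl)⟩, hxb⟩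
  have hxT : x ∈ Zᶜ ∪ {↑v, b} := hvx.right_mem.elim (by grind) .inl
  exact ((hvx.mono (by grind) le_rfl).trans (.of_adj hxb hxT (by simp))).mono subset_rfl (by omega)

/-- `H` avoids `v` and meets every walk of length at most `R` from `v` to another vertex
of `S`. -/
structure Separates (G : SimpleGraph V) (R : ℕ) (H : Set V) (v : V) (S : Set V) : Prop where
  notMem : v ∉ H
  not_linkedWithin : ∀ u ∈ S, u ≠ v → ¬ LinkedWithin G Hᶜ R v u

/-- The bound on the size of the separators obtained from `ShallowMinorsSparse G R a`. -/
def separatorBound (R a : ℕ) : ℕ := a * (1 + (2 * R + 1) * a) * (2 * (4 * a + 1))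

-- Inside `Z`, the neighbors of `v ∈ I` in the minor lie outside `I` because `I` is scattered, and
-- they meet every short walk from `v` to `Z`; by sparsity some `v ∈ I` has few of them.
lemma exists_separates [Finite V] (hG : ShallowMinorsSparse G R a) {S : Set V} (hS : S.Nonempty) :
    ∃ v ∈ S, ∃ H, H.ncard ≤ separatorBound R a ∧ Separates G R H v S := by
  obtain ⟨Z, I, hSZ, hIS, hI, hZ, hSI⟩ := exists_scattered hG S
  set I' : Set Z := Subtype.val ⁻¹' I
  have hI' : I'.ncard = I.ncard :=
    Set.ncard_preimage_of_injective_subset_range Subtype.val_injective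
      (by simpa using hIS.trans hSZ)
  have hball := isBranchSystem_outerBall hI
  set Γ := (contract G (outerBall G R Z I)).between I' I'ᶜ
  have hedges : Γ.edgeSet.ncard ≤ separatorBound R a * I'.ncard := calc
    Γ.edgeSet.ncard ≤ a * Z.ncard := hball.ncard_edgeSet_le hG SimpleGraph.between_le
    _ ≤ a * ((1 + (2 * R + 1) * a) * (2 * (4 * a + 1) * I.ncard)) := by grw [hZ, hSI]
    _ = separatorBound R a * I'.ncard := by
      rw [hI', separatorBound]
      ring
  have hne : I'.Nonempty := by
    rw [← Set.ncard_pos, hI']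
    have := (Set.ncard_pos).2 hS
    exact Nat.pos_of_mul_pos_left (this.trans_le hSI)
  obtain ⟨⟨v, hvZ⟩, hvI, hdeg⟩ := exists_ncard_neighborSet_le hne
    (SimpleGraph.between_isBipartiteWith disjoint_compl_right) hedges
  refine ⟨v, hIS hvI, Subtype.val '' Γ.neighborSet ⟨v, hvZ⟩, ?_, by simp, fun u hu huv hlink => ?_⟩
  · rwa [Set.ncard_image_of_injective _ Subtype.val_injective]
  · obtain ⟨b, hbH, hbI, hvb⟩ := hI.exists_adj_contract (v := ⟨v, hvZ⟩) hvI (hSZ hu) huv hlink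
    exact hbH ⟨b, ⟨hvb, .inl ⟨hvI, hbI⟩⟩, rfl⟩

end BranchSystems

section WeakColorings

variable {V α : Type*} {G : SimpleGraph V} {f : V → ℕ} {φ : V → α} {X Y : Set V}
  {a h n p r R : ℕ} {m x y : V}

/-- `u` is weakly `n`-reachable from `v` with respect to the order of the vertices given by `f`:
some walk of length at most `n` joins them on which `u` is the smallest vertex. -/
def WeaklyReachable (G : SimpleGraph V) (f : V → ℕ) (n : ℕ) (v u : V) : Prop :=
  LinkedWithin G {x | f u ≤ f x} n v u

/-- A coloring that distinguishes each vertex from all other vertices weakly `R`-reachable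
from it. -/
def IsWeakColoring (G : SimpleGraph V) (f : V → ℕ) (R : ℕ) (φ : V → α) : Prop :=
  ∀ u v, u ≠ v → WeaklyReachable G f R v u → φ u ≠ φ v

lemma ncard_weaklyReachable_le [Finite V] {H : V → Set V} (hcard : ∀ v, (H v).ncard ≤ h)
    (hsep : ∀ v, Separates G R (H v) v {u | f u ≤ f v}) (v : V) :
    {u | WeaklyReachable G f R v u}.ncard ≤ (h + 1) ^ R := by
  have key := ncard_le_pow_of_branching (N := H)
    (D := fun n v => {u | n ≤ R ∧ WeaklyReachable G f n v u}) hcard ?_ ?_ R v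
  · simpa using key
  · rintro v u ⟨-, q, hq, -⟩
    exact (SimpleGraph.Walk.eq_of_length_eq_zero (Nat.le_zero.1 hq)).symm
  · rintro n v u ⟨hn, hvu⟩
    by_cases huv : u = v
    · exact .inl huv
    obtain ⟨j, b, hj, hbH, hbu⟩ := hvu.exists_hit (hsep v).notMem fun hlink =>
      (hsep v).not_linkedWithin u hvu.left_mem huv (hlink.mono subset_rfl hn)
    exact .inr (Set.mem_biUnion hbH
      ⟨by omega, hbu.mono subset_rfl (Nat.lt_succ_iff.1 hj)⟩)

/-- The number of colors of the weak colorings obtained from `ShallowMinorsSparse G R a`. -/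
def weakColoringBound (R a : ℕ) : ℕ := (separatorBound R a + 1) ^ R + 1

lemma exists_isWeakColoring [Finite V] (hG : ShallowMinorsSparse G R a) :
    ∃ f : V → ℕ, Function.Injective f ∧
      ∃ φ : V → Fin (weakColoringBound R a), IsWeakColoring G f R φ := by
  obtain ⟨f, hf, hsep⟩ := exists_elimination_order
    (P := fun S v => ∃ H, H.ncard ≤ separatorBound R a ∧ Separates G R H v S)
    fun _ hS => exists_separates hG hS
  choose H hcard hsep using hsep
  have hwf : WellFounded fun u v => u ≠ v ∧ WeaklyReachable G f R v u :=
    Subrelation.wf (fun ⟨huv, hvu⟩ => lt_of_le_of_ne hvu.left_mem (hf.ne huv))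
      (InvImage.wf f wellFounded_lt)
  obtain ⟨φ, hφ⟩ := exists_greedy_coloring hwf fun v =>
    (Set.ncard_le_ncard fun _ hu => hu.2).trans (ncard_weaklyReachable_le hcard hsep v)
  exact ⟨f, hf, φ, fun u v huv hvu => hφ u v ⟨huv, hvu⟩⟩

lemma LinkedWithin.of_linked_insert
    (hY : ∀ Z ⊆ Y, (G.induce Z).Connected → ∀ x ∈ Z, ∀ y ∈ Z, LinkedWithin G Z r x y)
    (hx : Linked G (insert m Y) m x) : LinkedWithin G (insert m Y) (r + 1) m x := by
  by_cases hxm : x = m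
  · exact hxm ▸ .refl _ (.inl rfl)
  obtain ⟨c, b, hxc, hcb, -, hbm : b = m⟩ := hx.symm.exists_boundary (B := {m}) hxm rfl
  set Z := {z | Linked G (insert m Y \ {m}) x z}
  have hZY : Z ⊆ Y := fun z hz => hz.right_mem.1.resolve_left hz.right_mem.2
  have hxZc : LinkedWithin G Z r x c :=
    hY Z hZY (connected_induce_component hxc.left_mem) x (.refl hxc.left_mem) c hxc
  exact ((hxZc.mono (hZY.trans (Set.subset_insert m Y)) le_rfl).trans
    (.of_adj (hbm ▸ hcb) (.inr (hZY hxc)) (.inl rfl))).symm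

namespace IsWeakColoring

lemma eq_of_color_eq (hφ : IsWeakColoring G f R φ) (hr : r + 2 ≤ R)
    (hX : (G.induce X).Connected) (hm : m ∈ X) (hmin : ∀ x ∈ X, f m ≤ f x)
    (hY : ∀ Y ⊆ X, (∀ y ∈ Y, φ y ≠ φ m) → (G.induce Y).Connected →
      ∀ x ∈ Y, ∀ y ∈ Y, LinkedWithin G Y r x y) (hx : x ∈ X) (hxm : φ x = φ m) : x = m := by
  by_contra hne
  set B := {x | x ≠ m ∧ φ x = φ m} with hB
  obtain ⟨c, b, hmc, hcb, hbX, hbm, hbφ⟩ :=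
    (linked_of_connected hX hm hx).exists_boundary (B := B) (by simp [hB]) ⟨hne, hxm⟩
  have hlink : LinkedWithin G (insert m {y ∈ X | φ y ≠ φ m}) (r + 1) m c :=
    .of_linked_insert (fun Z hZ => hY Z (fun z hz => (hZ hz).1) fun z hz => (hZ hz).2)
      (hmc.mono (by grind))
  have hsub : insert m {y ∈ X | φ y ≠ φ m} ⊆ X := Set.insert_subset hm (Set.sep_subset ..)
  have hmb := (hlink.mono hsub le_rfl).trans (.of_adj hcb (hsub hlink.right_mem) hbX)
  exact hφ m b hbm.symm (hmb.symm.mono hmin hr) hbφ.symm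

-- The smallest vertex of `X` is the only one of its color, so the components that remain after
-- its removal use fewer colors; every vertex of `X` is close to it through one of them.
lemma linkedWithin_four_pow [Finite V] (hφ : IsWeakColoring G f R φ)
    (hX : (G.induce X).Connected) (hp : (φ '' X).ncard ≤ p) (hR : 4 ^ p ≤ R) (hx : x ∈ X)
    (hy : y ∈ X) : LinkedWithin G X (4 ^ p) x y := by
  induction p generalizing X x y with
  | zero =>
    rw [Nat.le_zero, Set.ncard_eq_zero] at hp
    exact absurd (Set.mem_image_of_mem φ hx) (hp ▸ Set.notMem_empty _)
  | succ p ih =>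
    have hpow : 2 * (4 ^ p + 1) ≤ 4 ^ (p + 1) := by
      have := Nat.one_le_pow p 4 (by norm_num)
      omega
    obtain ⟨m, hm, hmin⟩ := (Set.toFinite X).exists_minimalFor f X ⟨x, hx⟩
    replace hmin : ∀ x ∈ X, f m ≤ f x := fun x hx => (le_total (f m) (f x)).elim id (hmin hx)
    have hY : ∀ Y ⊆ X, (∀ y ∈ Y, φ y ≠ φ m) → (G.induce Y).Connected →
        ∀ x ∈ Y, ∀ y ∈ Y, LinkedWithin G Y (4 ^ p) x y := by
      intro Y hYX hYm hY x hx y hy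
      refine ih hY (Nat.lt_succ_iff.1 (lt_of_lt_of_le ?_ hp)) (by omega) hx hy
      refine Set.ncard_lt_ncard ⟨Set.image_mono hYX, fun hXY => ?_⟩
      obtain ⟨y, hy, hym⟩ := hXY (Set.mem_image_of_mem φ hm)
      exact hYm y hy hym
    have hXm : insert m (X \ {m}) = X := Set.insert_sdiff_self_of_mem hm
    have hlink : ∀ z ∈ X, LinkedWithin G X (4 ^ p + 1) m z := by
      intro z hz
      rw [← hXm]
      refine .of_linked_insert (fun Z hZ => hY Z (fun z hz => (hZ hz).1) fun z hz hzm => ?_)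
        (hXm.symm ▸ linked_of_connected hX hm hz)
      exact (hZ hz).2 (hφ.eq_of_color_eq (by omega) hX hm hmin hY (hZ hz).1 hzm)
    exact ((hlink x hx).symm.trans (hlink y hy)).mono subset_rfl (by omega)

lemma hasTreedepthAtMost [Finite V] [Finite α] (hφ : IsWeakColoring G f (4 ^ p) φ)
    (hf : Function.Injective f) (hp : Nat.card α ≤ p) : HasTreedepthAtMost G p := by
  set le : V → V → Prop := fun u v => Linked G {x | f u ≤ f x} u v
  have htotal : ∀ {u u' v}, le u v → le u' v → f u ≤ f u' → le u u' := fun huv hu'v hfu =>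
    huv.trans (hu'v.symm.mono fun _ hx => hfu.trans hx)
  refine ⟨le, ?_, fun v u huv u' hu'v _ => ?_, fun u v huv => ?_, fun v => ?_⟩
  · refine
      { refl := fun u => .refl (le_refl (f u))
        trans := fun u v w huv hvw => ?_
        antisymm := ?_ }
    · have hfuv : f u ≤ f v := huv.right_mem
      exact Linked.trans huv (Linked.mono (fun _ hx => hfuv.trans hx) hvw)
    · exact fun u v huv hvu => hf (le_antisymm huv.right_mem hvu.right_mem)
  · exact (le_total (f u) (f u')).imp (htotal huv hu'v) (htotal hu'v huv)
  · exact (le_total (f u) (f v)).imp (.of_adj huv (le_refl (f u)) ·)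
      (.of_adj huv.symm (le_refl (f v)) ·)
  have hne : ∀ {u u'}, le u u' → u ≠ u' → φ u ≠ φ u' := by
    intro u u' huu' hne
    set X := {x | Linked G {x | f u ≤ f x} u x}
    have hcard : (φ '' X).ncard ≤ p := (Set.ncard_le_card _).trans hp
    have huX : Linked G {x | f u ≤ f x} u u := .refl (le_refl (f u))
    exact hφ u u' hne <| (hφ.linkedWithin_four_pow (connected_induce_component huX.left_mem) hcard
      le_rfl huu' huX).mono (fun _ hx => hx.right_mem) le_rfl
  have hinj : Set.InjOn φ {u | le u v} := by
    intro u huv u' hu'v hφu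
    by_contra huu'
    rcases le_total (f u) (f u') with h | h
    · exact hne (htotal huv hu'v h) huu' hφu
    · exact hne (htotal hu'v huv h) (Ne.symm huu') hφu.symm
  rw [← hinj.ncard_image]
  exact (Set.ncard_le_card _).trans hp

lemma induce (hφ : IsWeakColoring G f R φ) (s : Set α) :
    IsWeakColoring (G.induce (φ ⁻¹' s)) (f ∘ Subtype.val) R (s.restrictPreimage φ) := by
  intro u v huv hvu hφuv
  refine hφ u v (Subtype.val_injective.ne huv) ?_ (congrArg Subtype.val hφuv)
  refine (LinkedWithin.map (SimpleGraph.Embedding.induce _).toHom hvu).mono ?_ le_rfl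
  rintro _ ⟨x, hx, rfl⟩
  exact hx

end IsWeakColoring

lemma exists_subset_preimage_range {T : Set V} (hT : T.ncard = n) (hn : n ≠ 0) (φ : V → α) :
    ∃ J : Fin n → α, T ⊆ φ ⁻¹' Set.range J := by
  have := Set.finite_of_ncard_ne_zero (hT ▸ hn)
  let e : T ≃ Fin n := this.equivFinOfCardEq hT
  exact ⟨fun i => φ (e.symm i), fun x hx => ⟨e ⟨x, hx⟩, by simp⟩⟩

end WeakColorings

theorem fStrong_bounded_of_boundedExpansion_general {V : Type*} [Finite V] {G : SimpleGraph V}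
    {k a : ℕ} (hk : 1 ≤ k) (hG : ShallowMinorsSparse G (4 ^ (k + 1)) a) :
    fStrong G k ≤ weakColoringBound (4 ^ (k + 1)) a ^ (k + 1) *
      ((k + 1) * ((k + 2) * (((k + 1) * k + 1) ^ (k + 1) * (k + 1)))) := by
  obtain ⟨f, hf, φ, hφ⟩ := exists_isWeakColoring hG
  have hparts (J : Fin (k + 1) → Fin (weakColoringBound (4 ^ (k + 1)) a)) :
      fStrong (G.induce (φ ⁻¹' Set.range J)) k ≤ _ :=
    fStrong_le_of_hasTreedepthAtMost ((hφ.induce _).hasTreedepthAtMost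
      (hf.comp Subtype.val_injective) (Finite.card_range_le J |>.trans_eq (Nat.card_fin _))) k
  calc fStrong G k ≤ ∑ J : Fin (k + 1) → Fin _, fStrong (G.induce (φ ⁻¹' Set.range J)) k :=
        fStrong_le_sum_induce hk _ fun _ _ hT => exists_subset_preimage_range hT k.succ_ne_zero φ
    _ ≤ _ := (Finset.sum_le_card_nsmul _ _ _ fun J _ => hparts J).trans_eq (by simp)

/-- For every class `C` of finite simple graphs of bounded expansion and
every positive integer `k` there is a constant `c` (depending only on `k` and `C`)
such that every graph `G` in `C` satisfies `f_k(G) ≤ c`. -/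
theorem fStrong_bounded_of_boundedExpansion (C : GraphClass) (hC : BoundedExpansion C)
    (k : ℕ) (hk : 1 ≤ k) :
    ∃ c : ℕ, ∀ (n : ℕ), ∀ G ∈ C n, fStrong G k ≤ c := by
  obtain ⟨a, ha⟩ := hC (4 ^ (k + 1))
  exact ⟨_, fun n G hG => fStrong_bounded_of_boundedExpansion_general hk
    fun m Γ hΓ => ha m Γ ⟨n, G, hG, hΓ⟩⟩

end InducedArboricity
end

section
/- For all integers k ≥ 1 and n ≥ 1 there exists a finite simple graph G with edge arboricity a'(G) = 2 and k-strong induced arboricity f_k(G) ≥ n. -/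
/-!
Subdivide every edge of a complete multigraph on `2 ^ n` branch vertices whose parallel classes
have `max n k` edges. Joining the subdivision vertices to their first endpoints gives one star
forest, joining them to their second endpoints another, so the edge arboricity is `2`. The star
formed by an endpoint of a parallel class and the vertices subdividing the class is induced and
has at least `k` edges, hence every edge of this star is `k`-valid.

Suppose that `N < n` strong forests cover all valid edges. There are only `2 ^ N` possibilities
for the set of forests containing a given branch vertex, so two branch vertices `i ≠ j` lie in
the same forests. The edges from `i` to the vertices subdividing the class of `i` and `j` number
more than `N`, so two of them, ending in `s` and `t` say, lie in a common forest. This forest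
also contains `j`, and therefore the cycle `i s j t`.
-/

open scoped Classical
open scoped Function

namespace InducedArboricity

section Acyclic

variable {V : Type*} {G : SimpleGraph V}

theorem isAcyclic_of_neighborSet_subsingleton
    (h : ∀ u v, G.Adj u v → (G.neighborSet u).Subsingleton ∨ (G.neighborSet v).Subsingleton) :
    G.IsAcyclic := by
  intro v c hc
  have not_subsingleton : ∀ u ∈ c.support, ¬ (G.neighborSet u).Subsingleton := by
    intro u hu hsub
    obtain ⟨x, y, hxy, hpair⟩ := Set.ncard_eq_two.1 (hc.ncard_neighborSet_toSubgraph_eq_two hu)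
    have hle : {x, y} ⊆ G.neighborSet u := hpair ▸ c.toSubgraph.neighborSet_subset u
    exact hxy (hsub (hle (by simp)) (hle (by simp)))
  rcases h v c.snd (c.adj_snd hc.not_nil) with hv | hsnd
  · exact not_subsingleton v c.start_mem_support hv
  · exact not_subsingleton c.snd (c.getVert_mem_support 1) hsnd

theorem commonNeighbors_subsingleton_of_isAcyclic (hG : G.IsAcyclic) {x y : V} (hxy : x ≠ y) :
    (G.commonNeighbors x y).Subsingleton := by
  rintro s ⟨hxs, hys⟩ t ⟨hxt, hyt⟩
  rw [SimpleGraph.mem_neighborSet] at hxs hys hxt hyt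
  let p : G.Walk x y := .cons hxs (.cons hys.symm .nil)
  let q : G.Walk x y := .cons hxt (.cons hyt.symm .nil)
  have hp : p.IsPath := by simp [p, SimpleGraph.Walk.cons_isPath_iff, hxs.ne, hxy, hys.ne']
  have hq : q.IsPath := by simp [q, SimpleGraph.Walk.cons_isPath_iff, hxt.ne, hxy, hyt.ne']
  have hpq : p = q := congrArg Subtype.val ((hG.subsingleton_path x y).elim ⟨p, hp⟩ ⟨q, hq⟩)
  exact congrArg SimpleGraph.Walk.snd hpq

theorem commonNeighbors_inter_subsingleton_of_isAcyclic_induce {S : Set V}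
    (hS : (G.induce S).IsAcyclic) {x y : V} (hx : x ∈ S) (hy : y ∈ S) (hxy : x ≠ y) :
    (G.commonNeighbors x y ∩ S).Subsingleton := by
  rintro s ⟨hs, hsS⟩ t ⟨ht, htS⟩
  have hne : (⟨x, hx⟩ : S) ≠ ⟨y, hy⟩ := fun h => hxy (congrArg Subtype.val h)
  have hsub := commonNeighbors_subsingleton_of_isAcyclic hS hne
  exact congrArg Subtype.val (@hsub ⟨s, hsS⟩ hs ⟨t, htS⟩ ht)

end Acyclic

section Arboricity

variable {V W ι : Type*} {G G₁ G₂ : SimpleGraph V} {H : SimpleGraph W}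

/-- A cover of the edges of `G` by the forests `F i ≤ G`; `arboricity G` is the least number of
members of such a family. -/
def IsForestCover (G : SimpleGraph V) (F : ι → SimpleGraph V) : Prop :=
  (∀ i, F i ≤ G ∧ (F i).IsAcyclic) ∧ ∀ e ∈ G.edgeSet, ∃ i, e ∈ (F i).edgeSet

theorem IsForestCover.isAcyclic [Subsingleton ι] {F : ι → SimpleGraph V}
    (hF : IsForestCover G F) : G.IsAcyclic := by
  rcases isEmpty_or_nonempty ι with _ | ⟨⟨i⟩⟩
  · have hbot : G = ⊥ := by
      rw [← SimpleGraph.edgeSet_eq_empty, Set.eq_empty_iff_forall_notMem]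
      exact fun e he => isEmptyElim (hF.2 e he).choose
    exact hbot ▸ SimpleGraph.isAcyclic_bot
  · refine (hF.1 i).2.anti (SimpleGraph.edgeSet_subset_edgeSet.1 fun e he => ?_)
    obtain ⟨j, hj⟩ := hF.2 e he
    exact Subsingleton.elim j i ▸ hj

theorem IsForestCover.comap {F : ι → SimpleGraph V} (hF : IsForestCover G F) (e : H ≃g G) :
    IsForestCover H fun i => (F i).comap e := by
  refine ⟨fun i => ⟨fun u v huv => e.map_adj_iff.1 ((hF.1 i).1 huv), ?_⟩, fun d hd => ?_⟩
  · exact (hF.1 i).2.of_comap e.toEquiv.toEmbedding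
  · induction d with | _ u v
    exact hF.2 s(e u, e v) (e.map_adj_iff.2 hd)

theorem arboricity_congr (e : G ≃g H) : arboricity G = arboricity H :=
  congrArg sInf <| Set.ext fun _ =>
    ⟨fun ⟨_, hF⟩ => ⟨_, IsForestCover.comap hF e.symm⟩,
      fun ⟨_, hF⟩ => ⟨_, IsForestCover.comap hF e⟩⟩

theorem arboricity_sup_eq_two (h₁ : G₁.IsAcyclic) (h₂ : G₂.IsAcyclic)
    (h : ¬ (G₁ ⊔ G₂).IsAcyclic) : arboricity (G₁ ⊔ G₂) = 2 := by
  have hcover : IsForestCover (G₁ ⊔ G₂) ![G₁, G₂] := by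
    refine ⟨Fin.forall_fin_two.2 ⟨⟨le_sup_left, h₁⟩, ⟨le_sup_right, h₂⟩⟩, fun e he => ?_⟩
    rw [SimpleGraph.edgeSet_sup] at he
    exact Fin.exists_fin_two.2 he
  refine le_antisymm (Nat.sInf_le ⟨_, hcover⟩) (le_csInf ⟨2, _, hcover⟩ ?_)
  rintro N ⟨F, hF⟩
  by_contra hN
  have : Subsingleton (Fin N) := Fin.subsingleton_iff_le_one.2 (by omega)
  exact h (IsForestCover.isAcyclic hF)

end Arboricity

section StrongForest

variable {V W : Type*} {G : SimpleGraph V} {H : SimpleGraph W} {k : ℕ}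

theorem ncard_neighborSet_le_compEdgeCount [Finite V] {v x : V} (h : G.Reachable v x) :
    (G.neighborSet x).ncard ≤ compEdgeCount G v := by
  refine Set.ncard_le_ncard_of_injOn (fun y => s(x, y)) (fun y hy => ⟨hy, ?_⟩)
    (fun y _ z _ hyz => Sym2.congr_right.1 hyz)
  rw [SimpleGraph.mem_neighborSet] at hy
  simpa [h] using h.trans hy.reachable

theorem isStrongForest_insert_of_isIndepSet {x : V} {T : Set V} (hfin : T.Finite)
    (hT : T ⊆ G.neighborSet x) (hindep : G.IsIndepSet T) (hk : k ≤ T.ncard) :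
    IsStrongForest G k (insert x T) := by
  have hnot : ∀ {s t}, s ∈ T → t ∈ T → ¬ G.Adj s t := fun hs ht hst => hindep hs ht hst.ne hst
  have hadj : ∀ {s}, s ∈ T → G.Adj x s := fun hs => hT hs
  let center : (insert x T : Set V) := ⟨x, T.mem_insert x⟩
  refine ⟨isAcyclic_of_neighborSet_subsingleton ?_, fun v => ?_⟩
  · have leaf : ∀ t : (insert x T : Set V), t.1 ∈ T →
        ((G.induce (insert x T)).neighborSet t).Subsingleton := fun t ht =>
      Set.subsingleton_of_forall_eq center fun s hs =>
        Subtype.ext (s.2.resolve_right fun hsT => hnot ht hsT hs)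
    rintro ⟨u, rfl | hu⟩ ⟨v, rfl | hv⟩ huv
    · exact (huv.ne rfl).elim
    · exact .inr (leaf _ hv)
    all_goals exact .inl (leaf _ hu)
  · have : Finite (insert x T : Set V) := hfin.insert x
    have hreach : (G.induce (insert x T)).Reachable v center := by
      rcases v with ⟨v, rfl | hv⟩
      · rfl
      · exact SimpleGraph.Adj.reachable (hadj hv).symm
    have hnbr : T ⊆ Subtype.val '' (G.induce (insert x T)).neighborSet center :=
      fun t ht => ⟨⟨t, .inr ht⟩, hadj ht, rfl⟩
    calc k ≤ T.ncard := hk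
      _ ≤ (Subtype.val '' (G.induce (insert x T)).neighborSet center).ncard :=
        Set.ncard_le_ncard hnbr
      _ ≤ ((G.induce (insert x T)).neighborSet center).ncard := Set.ncard_image_le
      _ ≤ compEdgeCount (G.induce (insert x T)) v := ncard_neighborSet_le_compEdgeCount hreach

theorem kValid_of_isIndepSet {x t : V} {T : Set V} (hfin : T.Finite) (hT : T ⊆ G.neighborSet x)
    (hindep : G.IsIndepSet T) (hk : k ≤ T.ncard) (ht : t ∈ T) : KValid G k s(x, t) :=
  ⟨insert x T, isStrongForest_insert_of_isIndepSet hfin hT hindep hk, hT ht, by simp [ht]⟩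

theorem compEdgeCount_congr (e : G ≃g H) (v : V) : compEdgeCount G v = compEdgeCount H (e v) := by
  have hpreimage : {d | d ∈ G.edgeSet ∧ ∀ x ∈ d, G.Reachable v x} =
      Sym2.map e ⁻¹' {d | d ∈ H.edgeSet ∧ ∀ x ∈ d, H.Reachable (e v) x} := by
    ext d
    simp [e.map_mem_edgeSet_iff, e.reachable_iff]
  rw [compEdgeCount, compEdgeCount, hpreimage, Set.ncard_preimage_of_injective_subset_range
    (Sym2.map.injective e.injective) fun d _ => ⟨d.map e.symm, by simp [Sym2.map_map]⟩]

theorem mem_forestEdges_map (e : G ≃g H) {S : Set V} {d : Sym2 V} (hd : d ∈ forestEdges G S) :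
    d.map e ∈ forestEdges H (e '' S) := by
  refine ⟨(e.map_mem_edgeSet_iff).2 hd.1, fun x hx => ?_⟩
  obtain ⟨y, hy, rfl⟩ := Sym2.mem_map.1 hx
  exact Set.mem_image_of_mem e (hd.2 y hy)

theorem IsStrongForest.map {S : Set V} (hS : IsStrongForest G k S) (e : G ≃g H) :
    IsStrongForest H k (e '' S) := by
  let eS : G.induce S ≃g H.induce (e '' S) := ⟨e.toEquiv.image S, e.map_adj_iff⟩
  refine ⟨eS.isAcyclic_iff.1 hS.1, fun w => ?_⟩
  obtain ⟨v, rfl⟩ := eS.surjective w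
  exact (hS.2 v).trans_eq (compEdgeCount_congr eS v)

theorem KValid.map {d : Sym2 V} (hd : KValid G k d) (e : G ≃g H) : KValid H k (d.map e) :=
  let ⟨_, hS, hdS⟩ := hd
  ⟨_, hS.map e, mem_forestEdges_map e hdS⟩

end StrongForest

section StrongForestCover

variable {V W ι : Type*} {G : SimpleGraph V} {H : SimpleGraph W} {k : ℕ}

/-- A cover of the `k`-valid edges of `G` by the `k`-strong forests induced by the sets `F i`;
`fStrong G k` is the least number of members of such a family. -/
def IsStrongForestCover (G : SimpleGraph V) (k : ℕ) (F : ι → Set V) : Prop :=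
  (∀ i, IsStrongForest G k (F i)) ∧ ∀ e : Sym2 V, KValid G k e → ∃ i, e ∈ forestEdges G (F i)

theorem IsStrongForestCover.map {F : ι → Set V} (hF : IsStrongForestCover G k F) (e : G ≃g H) :
    IsStrongForestCover H k fun i => e '' F i := by
  refine ⟨fun i => (hF.1 i).map e, fun d hd => ?_⟩
  obtain ⟨i, hi⟩ := hF.2 _ (hd.map e.symm)
  refine ⟨i, ?_⟩
  simpa [Sym2.map_map] using mem_forestEdges_map e hi

theorem fStrong_congr (e : G ≃g H) : fStrong G k = fStrong H k :=
  congrArg sInf <| Set.ext fun _ =>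
    ⟨fun ⟨_, hF⟩ => ⟨_, IsStrongForestCover.map hF e⟩,
      fun ⟨_, hF⟩ => ⟨_, IsStrongForestCover.map hF e.symm⟩⟩

theorem exists_isStrongForestCover_fStrong [Finite V] (G : SimpleGraph V) (k : ℕ) :
    ∃ F : Fin (fStrong G k) → Set V, IsStrongForestCover G k F := by
  refine Nat.sInf_mem (s := {N | ∃ F : Fin N → Set V, IsStrongForestCover G k F}) ?_
  let f := Finite.equivFin {d : Sym2 V // KValid G k d}
  choose S hS hmem using fun d : {d : Sym2 V // KValid G k d} => d.2
  exact ⟨_, S ∘ f.symm, fun i => hS _, fun d hd => ⟨f ⟨d, hd⟩, by simpa using hmem ⟨d, hd⟩⟩⟩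

theorem IsStrongForestCover.ncard_le_card_of_subset_commonNeighbors [Finite ι]
    {F : ι → Set V} (hF : IsStrongForestCover G k F) {x y : V} (hxy : x ≠ y)
    (htrace : ∀ i, x ∈ F i → y ∈ F i)
    {T : Set V} (hT : T ⊆ G.commonNeighbors x y) (hvalid : ∀ t ∈ T, KValid G k s(x, t)) :
    T.ncard ≤ Nat.card ι := by
  choose c hc using fun t : T => hF.2 _ (hvalid t t.2)
  have hx : ∀ t, x ∈ F (c t) := fun t => (hc t).2 x (Sym2.mem_mk_left _ _)
  have ht : ∀ t, t.1 ∈ F (c t) := fun t => (hc t).2 t (Sym2.mem_mk_right _ _)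
  rw [← Nat.card_coe_set_eq]
  refine Nat.card_le_card_of_injective c fun s t hst => Subtype.ext ?_
  exact commonNeighbors_inter_subsingleton_of_isAcyclic_induce (hF.1 (c t)).1 (hx t)
    (htrace _ (hx t)) hxy ⟨hT s.2, hst ▸ ht s⟩ ⟨hT t.2, ht t⟩

theorem IsStrongForestCover.ncard_le_two_pow [Finite ι] {F : ι → Set V}
    (hF : IsStrongForestCover G k F) {A : Set V}
    (hA : A.Pairwise fun x y => ∃ T ⊆ G.commonNeighbors x y,
      (∀ t ∈ T, KValid G k s(x, t)) ∧ Nat.card ι < T.ncard) :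
    A.ncard ≤ 2 ^ Nat.card ι := by
  have := Fintype.ofFinite ι
  have trace_injOn : A.InjOn fun x => {i | x ∈ F i} := by
    intro x hx y hy htrace
    by_contra hxy
    obtain ⟨T, hT, hvalid, hcard⟩ := hA hx hy hxy
    exact hcard.not_ge <|
      hF.ncard_le_card_of_subset_commonNeighbors hxy (fun i hi => htrace.subset hi) hT hvalid
  calc A.ncard = ((fun x => {i | x ∈ F i}) '' A).ncard := trace_injOn.ncard_image.symm
    _ ≤ Nat.card (Set ι) := Set.ncard_le_card _
    _ = 2 ^ Nat.card ι := by simp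

theorem le_fStrong_of_pairwise_exists_isIndepSet [Finite V] {n : ℕ} {A : Set V}
    (hcard : 2 ^ n ≤ A.ncard)
    (hA : A.Pairwise fun x y => ∃ T ⊆ G.commonNeighbors x y,
      G.IsIndepSet T ∧ max n k ≤ T.ncard) :
    n ≤ fStrong G k := by
  obtain ⟨F, hF⟩ := exists_isStrongForestCover_fStrong G k
  by_contra! hlt
  have hle : A.ncard ≤ 2 ^ Nat.card (Fin (fStrong G k)) :=
    hF.ncard_le_two_pow fun x hx y hy hxy => by
      obtain ⟨T, hT, hindep, hTcard⟩ := hA hx hy hxy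
      obtain ⟨hn, hk⟩ := max_le_iff.1 hTcard
      have hTx : T ⊆ G.neighborSet x := hT.trans Set.inter_subset_left
      exact ⟨T, hT, fun t => kValid_of_isIndepSet T.toFinite hTx hindep hk,
        by simpa using hlt.trans_le hn⟩
  rw [Nat.card_fin] at hle
  exact (hcard.trans hle).not_gt (Nat.pow_lt_pow_right one_lt_two hlt)

end StrongForestCover

section Construction

/-- The disjoint union of stars with centres `a : A`, the leaves at `a` being the `u : U` with
`p u = a`. Two such forests on the same vertices make up `subdividedMultigraph`. -/
def starForest {A U : Type*} (p : U → A) : SimpleGraph (A ⊕ U) where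
  Adj
    | .inl a, .inr u => p u = a
    | .inr u, .inl a => p u = a
    | _, _ => False
  symm := ⟨by rintro (_ | _) (_ | _) h <;> exact h⟩
  loopless := ⟨by rintro (_ | _) h <;> exact h⟩

theorem isAcyclic_starForest {A U : Type*} (p : U → A) : (starForest p).IsAcyclic := by
  have leaf : ∀ u, ((starForest p).neighborSet (.inr u)).Subsingleton := fun u =>
    Set.subsingleton_of_forall_eq (.inl (p u)) <| by
      rintro (a | v) h
      · exact congrArg Sum.inl (Eq.symm h)
      · exact h.elim
  refine isAcyclic_of_neighborSet_subsingleton ?_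
  rintro (a | u) (b | v) h
  · exact h.elim
  · exact .inr (leaf v)
  all_goals exact .inl (leaf u)

variable (A T : Type*)

/-- The complete multigraph on `A` with every edge subdivided once: `(i, j, t)` subdivides the
`t`-th parallel edge from `i` to `j`. Pairs are ordered, and `(i, i, t)` is a pendant vertex at
`i`. Joining every subdivision vertex to its first and to its second endpoint gives two star
forests. -/
def subdividedMultigraph : SimpleGraph (A ⊕ A × A × T) :=
  starForest (fun u => u.1) ⊔ starForest (fun u => u.2.1)

variable {A T}

theorem inr_mem_commonNeighbors_subdividedMultigraph (i j : A) (t : T) :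
    .inr (i, j, t) ∈ (subdividedMultigraph A T).commonNeighbors (.inl i) (.inl j) :=
  ⟨.inl rfl, .inr rfl⟩

theorem isIndepSet_range_inr_subdividedMultigraph :
    (subdividedMultigraph A T).IsIndepSet (Set.range .inr) := by
  rintro _ ⟨u, rfl⟩ _ ⟨v, rfl⟩ - (h | h) <;> exact h

theorem arboricity_subdividedMultigraph [Nontrivial A] [Nonempty T] :
    arboricity (subdividedMultigraph A T) = 2 := by
  refine arboricity_sup_eq_two (isAcyclic_starForest _) (isAcyclic_starForest _) fun hacyc => ?_
  obtain ⟨i, j, hij⟩ := exists_pair_ne A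
  obtain ⟨t⟩ := ‹Nonempty T›
  have hsub := commonNeighbors_subsingleton_of_isAcyclic hacyc (Sum.inl_injective.ne hij)
  have heq := hsub (inr_mem_commonNeighbors_subdividedMultigraph i j t)
    (SimpleGraph.commonNeighbors_symm _ _ _ ▸ inr_mem_commonNeighbors_subdividedMultigraph j i t)
  exact hij (congrArg Prod.fst (Sum.inr_injective heq))

theorem le_fStrong_subdividedMultigraph [Finite A] [Finite T] {k n : ℕ} (hA : 2 ^ n ≤ Nat.card A)
    (hT : max n k ≤ Nat.card T) : n ≤ fStrong (subdividedMultigraph A T) k := by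
  refine le_fStrong_of_pairwise_exists_isIndepSet (A := Set.range Sum.inl) ?_ ?_
  · rwa [Set.ncard_range_of_injective Sum.inl_injective]
  rintro _ ⟨i, rfl⟩ _ ⟨j, rfl⟩ -
  have hinj : Function.Injective fun t : T => (Sum.inr (i, j, t) : A ⊕ A × A × T) :=
    fun s t h => congrArg (fun u : A × A × T => u.2.2) (Sum.inr_injective h)
  refine ⟨Set.range fun t : T => .inr (i, j, t), ?_, ?_, ?_⟩
  · rintro _ ⟨t, rfl⟩
    exact inr_mem_commonNeighbors_subdividedMultigraph i j t
  · exact isIndepSet_range_inr_subdividedMultigraph.mono (Set.range_comp_subset_range _ Sum.inr)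
  · rwa [Set.ncard_range_of_injective hinj]

end Construction

/-- For all integers `k ≥ 1` and `n ≥ 1` there is a finite simple graph `G`
with edge arboricity `a'(G) = 2` and `f_k(G) ≥ n`. -/
theorem exists_arboricity_two_fStrong_ge (k n : ℕ) (hk : 1 ≤ k) (hn : 1 ≤ n) :
    ∃ (m : ℕ) (G : SimpleGraph (Fin m)), arboricity G = 2 ∧ n ≤ fStrong G k := by
  have : Nontrivial (Fin (2 ^ n)) := Fin.nontrivial_iff_two_le.2 (Nat.le_pow hn)
  have : Nonempty (Fin (max n k)) := ⟨⟨0, by omega⟩⟩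
  let G := subdividedMultigraph (Fin (2 ^ n)) (Fin (max n k))
  let e := G.overFinIso rfl
  refine ⟨_, G.overFin rfl, ?_, ?_⟩
  · rw [← arboricity_congr e]
    exact arboricity_subdividedMultigraph
  · rw [← fStrong_congr e]
    exact le_fStrong_subdividedMultigraph (by simp) (by simp)

end InducedArboricity
end
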